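/- arXiv:1502.05030 — 3 statements merged into one kernel-verified Lean document; each statement's English description precedes it below -/
import Mathlib

section
/- Let n ≥ 2 and let X ⊆ [-1,1]. Let V be a finite subset of the unit sphere S^{n-1} in ℝ^n, and let H = (V,E) be the graph on vertex set V in which two points ξ, η ∈ V are joined by an edge if and only if ⟨ξ,η⟩ ∈ X. Then for every Lebesgue measurable X-avoiding set I ⊆ S^{n-1}, the normalized surface measure of I satisfies λ(I) ≤ α(H)/|V|, where α(H) is the independence number of H. -/
open MeasureTheory Metric Matrix Filter
open scoped RealInnerProductSpace ENNReal

noncomputable section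

/-- `ℝ^n` as a Euclidean space. -/
abbrev Eucl (n : ℕ) : Type := EuclideanSpace ℝ (Fin n)

/-- The unit sphere `S^{n-1}` in `ℝ^n`. -/
abbrev Sph (n : ℕ) := Metric.sphere (0 : Eucl n) 1

/-- The Lebesgue surface measure on the unit sphere `S^{n-1}`, normalised so that the
total measure of the sphere is `1`. -/
def sphMeasure (n : ℕ) : Measure (Sph n) :=
  (((volume : Measure (Eucl n)).toSphere) Set.univ)⁻¹ • (volume : Measure (Eucl n)).toSphere

/-- A subset `I` of the sphere is `X`-avoiding if `⟪ξ, η⟫ ∉ X` for all `ξ, η ∈ I`. -/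
def Avoids {n : ℕ} (X : Set ℝ) (I : Set (Sph n)) : Prop :=
  ∀ ξ ∈ I, ∀ η ∈ I, ⟪(ξ : Eucl n), (η : Eucl n)⟫ ∉ X

/-!
Choose `g` at random in the orthogonal group according to Haar measure. By transitivity, `g • ξ` is
uniformly distributed on the sphere for each fixed `ξ`, so the expected number of points `ξ ∈ V`
with `g • ξ ∈ I` is `|V| * λ(I)`. Since `g` preserves inner products, these points are always
independent in `H`, so there are never more than `α(H)` of them.

This is the no-homomorphism lemma of Albertson and Collins: it applies to every homomorphism from a
finite graph to a graph on which a group acts transitively by homomorphisms.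
-/

section Averaging

open scoped Finset

open scoped Classical in
theorem sum_measure_le_mul_of_card_filter_le {Ω ι : Type*} [MeasurableSpace Ω] (μ : Measure Ω)
    {s : Finset ι} {A : ι → Set Ω} (hA : ∀ i ∈ s, MeasurableSet (A i)) {k : ℕ}
    (hk : ∀ ω, #{i ∈ s | ω ∈ A i} ≤ k) :
    ∑ i ∈ s, μ (A i) ≤ k * μ Set.univ :=
  calc ∑ i ∈ s, μ (A i)
      = ∑ i ∈ s, ∫⁻ ω, (A i).indicator 1 ω ∂μ :=
        Finset.sum_congr rfl fun i hi => (lintegral_indicator_one (hA i hi)).symm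
    _ = ∫⁻ ω, ∑ i ∈ s, (A i).indicator 1 ω ∂μ :=
        (lintegral_finsetSum s fun i hi => measurable_one.indicator (hA i hi)).symm
    _ = ∫⁻ ω, (#{i ∈ s | ω ∈ A i} : ℝ≥0∞) ∂μ := by simp [Set.indicator_apply]
    _ ≤ ∫⁻ _, (k : ℝ≥0∞) ∂μ := lintegral_mono fun ω => Nat.cast_le.mpr (hk ω)
    _ = k * μ Set.univ := lintegral_const _

variable {M α : Type*} [Monoid M] [MulAction M α] [MulAction.IsPretransitive M α]
  [MeasurableSpace M] [MeasurableMul M] [MeasurableSpace α] [MeasurableSMul₂ M α]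

theorem map_smul_right_eq_of_isPretransitive (μ : Measure M) [IsProbabilityMeasure μ]
    [μ.IsMulRightInvariant] (ν : Measure α) [IsProbabilityMeasure ν] [SMulInvariantMeasure M α ν]
    (x : α) : μ.map (· • x) = ν := by
  ext I hI
  have measure_preimage_eq (y : α) : μ ((· • y) ⁻¹' I) = μ ((· • x) ⁻¹' I) := by
    obtain ⟨h, rfl⟩ := MulAction.exists_smul_eq M x y
    rw [← (measurePreserving_mul_right μ h).measure_preimage
      (measurable_smul_const x hI).nullMeasurableSet]
    simp only [Set.preimage_preimage, mul_smul]
  have hI' : MeasurableSet ((fun p : M × α => p.1 • p.2) ⁻¹' I) := measurable_smul hI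
  rw [Measure.map_apply (measurable_smul_const x) hI]
  calc μ ((· • x) ⁻¹' I)
      = ∫⁻ y, μ ((· • y) ⁻¹' I) ∂ν := by simp [measure_preimage_eq]
    _ = μ.prod ν ((fun p : M × α => p.1 • p.2) ⁻¹' I) := (Measure.prod_apply_symm hI').symm
    _ = ∫⁻ g, ν ((g • ·) ⁻¹' I) ∂μ := Measure.prod_apply hI'
    _ = ν I := by simp [SMulInvariantMeasure.measure_preimage_smul _ hI]

theorem measure_le_indepNum_div_card_of_hom {W : Type*} [Fintype W] [Nonempty W]
    (μ : Measure M) [IsProbabilityMeasure μ] [μ.IsMulRightInvariant]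
    (ν : Measure α) [IsProbabilityMeasure ν] [SMulInvariantMeasure M α ν]
    {Γ : SimpleGraph α} (hΓ : ∀ (g : M) ⦃x y : α⦄, Γ.Adj x y → Γ.Adj (g • x) (g • y))
    {H : SimpleGraph W} (f : H →g Γ) {I : Set α} (hI : MeasurableSet I) (hIΓ : Γ.IsIndepSet I) :
    ν I ≤ (H.indepNum : ℝ≥0∞) / (Fintype.card W : ℝ≥0∞) := by
  classical
  have card_hits_le (g : M) : #{w : W | g ∈ (· • f w) ⁻¹' I} ≤ H.indepNum := by
    refine SimpleGraph.IsIndepSet.card_le_indepNum fun v hv w hw _ hvw => ?_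
    have hadj : Γ.Adj (g • f v) (g • f w) := hΓ g (f.map_rel hvw)
    exact hIΓ (by simpa using hv) (by simpa using hw) hadj.ne hadj
  rw [ENNReal.le_div_iff_mul_le (by simp) (by simp)]
  calc ν I * Fintype.card W
      = ∑ w : W, μ ((· • f w) ⁻¹' I) := by
        simp [← Measure.map_apply (measurable_smul_const _) hI,
          map_smul_right_eq_of_isPretransitive μ ν, mul_comm]
    _ ≤ H.indepNum * μ Set.univ :=
        sum_measure_le_mul_of_card_filter_le μ (fun w _ => measurable_smul_const (f w) hI)
          card_hits_le
    _ = H.indepNum := by simp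

end Averaging

theorem exists_isProbabilityMeasure_isMulRightInvariant (G : Type*) [Group G] [TopologicalSpace G]
    [IsTopologicalGroup G] [CompactSpace G] [MeasurableSpace G] [BorelSpace G] :
    ∃ μ : Measure G, IsProbabilityMeasure μ ∧ μ.IsMulRightInvariant := by
  refine ⟨(Measure.haarMeasure ⊤).inv, ⟨?_⟩, inferInstance⟩
  simpa using Measure.haarMeasure_self (K₀ := (⊤ : TopologicalSpace.PositiveCompacts G))

instance compactSpace_unitary (A : Type*) [NormedRing A] [StarRing A] [CStarRing A]
    [ProperSpace A] : CompactSpace (unitary A) := by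
  nontriviality A
  have unitary_subset : (unitary A : Set A) ⊆ closedBall 0 1 := fun u hu => by
    simp [CStarRing.norm_of_mem_unitary hu]
  exact isCompact_iff_compactSpace.mp
    ((isCompact_closedBall 0 1).of_isClosed_subset isClosed_unitary unitary_subset)

section UnitaryAction

open scoped Pointwise

variable {E : Type*} [NormedAddCommGroup E] [InnerProductSpace ℝ E]

section Complete

variable [CompleteSpace E]

/-- The orthogonal group of `E`, realised as the unitary elements of `E →L[ℝ] E`, acts on the
spheres centred at the origin. -/
instance unitaryMulActionSphere (r : ℝ) : MulAction (unitary (E →L[ℝ] E)) (sphere (0 : E) r) where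
  smul g ξ := ⟨g • (ξ : E), mem_sphere_zero_iff_norm.mpr <|
    (Unitary.norm_map g ξ).trans (mem_sphere_zero_iff_norm.mp ξ.2)⟩
  one_smul _ := rfl
  mul_smul _ _ _ := rfl

@[simp]
theorem coe_unitary_smul_sphere {r : ℝ} (g : unitary (E →L[ℝ] E)) (ξ : sphere (0 : E) r) :
    ((g • ξ : sphere (0 : E) r) : E) = g • (ξ : E) :=
  rfl

theorem inner_unitary_smul_smul (g : unitary (E →L[ℝ] E)) (x y : E) : ⟪g • x, g • y⟫ = ⟪x, y⟫ :=
  Unitary.inner_map_map g x y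

instance continuousSMul_unitary_sphere (r : ℝ) :
    ContinuousSMul (unitary (E →L[ℝ] E)) (sphere (0 : E) r) where
  continuous_smul := Continuous.subtype_mk
    ((continuous_subtype_val.comp continuous_fst).clm_apply
      (continuous_subtype_val.comp continuous_snd)) _

instance isPretransitive_unitary_sphere (r : ℝ) :
    MulAction.IsPretransitive (unitary (E →L[ℝ] E)) (sphere (0 : E) r) where
  -- The reflection in the hyperplane orthogonal to `ξ - η` exchanges `ξ` and `η`.
  exists_smul_eq ξ η := ⟨Unitary.linearIsometryEquiv.symm (ℝ ∙ ((ξ : E) - η))ᗮ.reflection,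
    Subtype.ext <| Submodule.reflection_sub <| by simp⟩

variable [MeasurableSpace E] [BorelSpace E]

instance smulInvariantMeasure_unitary_toSphere (μ : Measure E)
    [SMulInvariantMeasure (unitary (E →L[ℝ] E)) E μ] :
    SMulInvariantMeasure (unitary (E →L[ℝ] E)) (sphere (0 : E) 1) μ.toSphere where
  measure_preimage_smul g I hI := by
    have cone_smul : (Set.Ioo (0 : ℝ) 1 • (Subtype.val '' (g⁻¹ • I)) : Set E) =
        g⁻¹ • (Set.Ioo (0 : ℝ) 1 • (Subtype.val '' I)) := by
      rw [Set.image_smul_comm _ _ _ (coe_unitary_smul_sphere g⁻¹), smul_comm]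
    rw [μ.toSphere_apply' hI, μ.toSphere_apply' (measurable_const_smul g hI), Set.preimage_smul,
      cone_smul, measure_smul]

end Complete

instance smulInvariantMeasure_unitary_volume [FiniteDimensional ℝ E] [MeasurableSpace E]
    [BorelSpace E] : SMulInvariantMeasure (unitary (E →L[ℝ] E)) E volume where
  measure_preimage_smul g _ hs :=
    (Unitary.linearIsometryEquiv g).measurePreserving.measure_preimage hs.nullMeasurableSet

end UnitaryAction

section InnerGraph

variable {E : Type*} [NormedAddCommGroup E] [InnerProductSpace ℝ E] {X : Set ℝ}

/-- The graph on a set `s` of vectors joining two distinct points whose inner product lies in `X`;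
the graph `H` of the theorem is its restriction to a finite subset of the unit sphere. -/
def innerGraph (s : Set E) (X : Set ℝ) : SimpleGraph s where
  Adj ξ η := ξ ≠ η ∧ ⟪(ξ : E), (η : E)⟫ ∈ X
  symm := ⟨fun ξ η h => ⟨h.1.symm, real_inner_comm (ξ : E) η ▸ h.2⟩⟩
  loopless := ⟨fun _ h => h.1 rfl⟩

theorem innerGraph_adj {s : Set E} {ξ η : s} :
    (innerGraph s X).Adj ξ η ↔ ξ ≠ η ∧ ⟪(ξ : E), (η : E)⟫ ∈ X :=
  Iff.rfl

theorem isIndepSet_innerGraph_iff {s : Set E} {S : Set s} :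
    (innerGraph s X).IsIndepSet S ↔ ∀ ξ ∈ S, ∀ η ∈ S, ξ ≠ η → ⟪(ξ : E), (η : E)⟫ ∉ X := by
  simp +contextual [SimpleGraph.isIndepSet_iff, Set.Pairwise, innerGraph_adj]

theorem innerGraph_adj_smul [CompleteSpace E] {r : ℝ} (g : unitary (E →L[ℝ] E))
    ⦃ξ η : sphere (0 : E) r⦄ (h : (innerGraph (sphere 0 r) X).Adj ξ η) :
    (innerGraph (sphere 0 r) X).Adj (g • ξ) (g • η) := by
  simpa only [innerGraph_adj, ne_eq, smul_left_cancel_iff, coe_unitary_smul_sphere,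
    inner_unitary_smul_smul] using h

theorem combinatorial_upper_bound_general [FiniteDimensional ℝ E] [MeasurableSpace E]
    [BorelSpace E] {r : ℝ} (ν : Measure (sphere (0 : E) r)) [IsProbabilityMeasure ν]
    [SMulInvariantMeasure (unitary (E →L[ℝ] E)) (sphere (0 : E) r) ν]
    {W : Type*} [Fintype W] [Nonempty W] {H : SimpleGraph W}
    (f : H →g innerGraph (sphere (0 : E) r) X) {I : Set (sphere (0 : E) r)}
    (hI : MeasurableSet I) (hIX : (innerGraph (sphere 0 r) X).IsIndepSet I) :
    ν I ≤ (H.indepNum : ℝ≥0∞) / (Fintype.card W : ℝ≥0∞) := by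
  obtain ⟨μ, _, _⟩ := exists_isProbabilityMeasure_isMulRightInvariant (unitary (E →L[ℝ] E))
  exact measure_le_indepNum_div_card_of_hom μ ν innerGraph_adj_smul f hI hIX

end InnerGraph

theorem indepNum_induce_eq_sSup {α : Type*} (Γ : SimpleGraph α) (V : Finset α) :
    (Γ.induce (V : Set α)).indepNum =
      sSup {k | ∃ S : Finset α, S ⊆ V ∧ Γ.IsIndepSet S ∧ S.card = k} := by
  classical
  refine congrArg sSup (Set.ext fun k => ⟨?_, ?_⟩)
  · rintro ⟨S, hS, rfl⟩
    refine ⟨S.map (.subtype _), fun _ => by simp +contextual, ?_, S.card_map _⟩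
    rw [Finset.coe_map]
    exact (Set.InjOn.pairwise_image Subtype.val_injective.injOn).mpr hS
  · rintro ⟨S, hSV, hS, rfl⟩
    refine ⟨S.subtype (· ∈ (V : Set α)), fun v hv w hw hne => ?_, ?_⟩
    · exact hS (by simpa using hv) (by simpa using hw) (Subtype.coe_ne_coe.mpr hne)
    · exact (Finset.card_subtype _ _).trans <| congrArg _ <| Finset.filter_true_of_mem hSV

instance isProbabilityMeasure_sphMeasure (n : ℕ) [NeZero n] :
    IsProbabilityMeasure (sphMeasure n) :=
  have : NeZero (volume : Measure (Eucl n)).toSphere := ⟨Measure.toSphere_ne_zero _⟩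
  isProbabilityMeasureSMul

instance smulInvariantMeasure_sphMeasure (n : ℕ) :
    SMulInvariantMeasure (unitary (Eucl n →L[ℝ] Eucl n)) (Sph n) (sphMeasure n) :=
  SMulInvariantMeasure.smul _

/-- **Proposition (combinatorial upper bound).** Let `n ≥ 2` and `X ⊆ [-1,1]`. For a finite
subset `V` of the sphere, consider the graph `H` on `V` joining `ξ ≠ η` when `⟪ξ, η⟫ ∈ X`.
Then every measurable `X`-avoiding set `I` satisfies `λ(I) ≤ α(H) / |V|`, where `α(H)`,
the independence number of `H`, is the largest cardinality of a subset of `V` containing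
no two adjacent vertices. -/
theorem combinatorial_upper_bound {n : ℕ} (hn : 2 ≤ n) (X : Set ℝ)
    (hX : X ⊆ Set.Icc (-1 : ℝ) 1) (V : Finset (Sph n)) (hV : V.Nonempty)
    (I : Set (Sph n)) (hI : MeasurableSet I) (hIav : Avoids X I) :
    sphMeasure n I ≤
      ((sSup {k : ℕ | ∃ S : Finset (Sph n), S ⊆ V ∧
          (∀ ξ ∈ S, ∀ η ∈ S, ξ ≠ η → ⟪(ξ : Eucl n), (η : Eucl n)⟫ ∉ X) ∧ S.card = k} :
        ℕ) : ℝ≥0∞) / (V.card : ℝ≥0∞) := by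
  have : NeZero n := ⟨by omega⟩
  have : Nonempty (V : Set (Sph n)) := hV.to_subtype
  simpa only [indepNum_induce_eq_sSup, isIndepSet_innerGraph_iff, Finset.mem_coe,
    ← Set.toFinset_card, Finset.toFinset_coe] using
    combinatorial_upper_bound_general (sphMeasure n)
      (SimpleGraph.Embedding.induce (G := innerGraph (Sph n) X) (V : Set (Sph n))).toHom hI
      (isIndepSet_innerGraph_iff.mpr fun ξ hξ η hη _ => hIav ξ hξ η hη)
end
end

section
/- Let x ∈ [-1,1], X = {x}, and suppose t = arccos(x)/(2π) is rational, say t = p/q with p, q coprime nonnegative integers and q even. Then the supremum of λ(I) over all Lebesgue measurable X-avoiding subsets I of the unit circle S^1 equals 1/2, and this supremum is attained: there exists a measurable X-avoiding set I ⊆ S^1 with λ(I) = 1/2. -/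
open MeasureTheory Metric Matrix Filter
open scoped RealInnerProductSpace ENNReal

noncomputable section

/-! For `x = cos θ`, two points of the circle have inner product `x` exactly when one is the image
of the other under the rotation by `θ`, so a set is `{x}`-avoiding iff it is disjoint from its
rotated copy, and then its measure is at most `1/2`. If `θ = 2πp/q` with `p` odd and `q = 2m`, then
`m • θ = π` modulo `2π`. Cutting the circle into `q` half-open arcs of equal length and keeping
every other one gives a set that the rotation by `θ` exchanges with its complement. -/

section Measure

variable {α : Type*} [MeasurableSpace α] {μ : Measure α} {f : α → α} {s : Set α}

lemma measure_le_half_of_disjoint_preimage (hf : MeasurePreserving f μ μ)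
    (hs : NullMeasurableSet s μ) (hd : Disjoint s (f ⁻¹' s)) : μ s ≤ μ Set.univ / 2 := by
  rw [ENNReal.le_div_iff_mul_le (by simp) (by simp)]
  calc μ s * 2 = μ s + μ (f ⁻¹' s) := by rw [hf.measure_preimage hs, mul_two]
    _ = μ (s ∪ f ⁻¹' s) := (measure_union₀' hs hd.aedisjoint).symm
    _ ≤ μ Set.univ := measure_mono (Set.subset_univ _)

lemma measure_eq_half_of_preimage_eq_compl (hf : MeasurePreserving f μ μ)
    (hs : NullMeasurableSet s μ) (hc : f ⁻¹' s = sᶜ) : μ s = μ Set.univ / 2 := by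
  rw [ENNReal.eq_div_iff (by simp) (by simp)]
  calc 2 * μ s = μ s + μ (f ⁻¹' s) := by rw [hf.measure_preimage hs, two_mul]
    _ = μ Set.univ := by rw [hc, measure_add_measure_compl₀ hs]

end Measure

section UnitSphereMap

variable {E F : Type*} [NormedAddCommGroup E] [NormedSpace ℝ E] [NormedAddCommGroup F]
  [NormedSpace ℝ F]

/-- The map between unit spheres induced by a linear isometry equivalence. -/
def unitSphereMap (e : E ≃ₗᵢ[ℝ] F) (ξ : sphere (0 : E) 1) : sphere (0 : F) 1 :=
  ⟨e ξ, by simp⟩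

@[simp]
lemma coe_unitSphereMap (e : E ≃ₗᵢ[ℝ] F) (ξ : sphere (0 : E) 1) :
    (unitSphereMap e ξ : F) = e ξ :=
  rfl

lemma continuous_unitSphereMap (e : E ≃ₗᵢ[ℝ] F) : Continuous (unitSphereMap e) := by
  unfold unitSphereMap
  fun_prop

open scoped Pointwise in
lemma smul_coe_image_preimage_unitSphereMap (e : E ≃ₗᵢ[ℝ] F) (R : Set ℝ)
    (I : Set (sphere (0 : F) 1)) :
    R • ((↑) '' (unitSphereMap e ⁻¹' I) : Set E) = e ⁻¹' (R • ((↑) '' I)) := by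
  ext v
  constructor
  · rintro ⟨r, hr, _, ⟨ξ, hξ, rfl⟩, rfl⟩
    exact ⟨r, hr, e ξ, ⟨_, hξ, rfl⟩, (map_smul e r (ξ : E)).symm⟩
  · rintro ⟨r, hr, _, ⟨η, hη, rfl⟩, hv⟩
    refine ⟨r, hr, e.symm η, ⟨unitSphereMap e.symm η, ?_, rfl⟩, ?_⟩
    · rwa [Set.mem_preimage, show unitSphereMap e (unitSphereMap e.symm η) = η from
        Subtype.ext (e.apply_symm_apply η)]
    · exact (map_smul e.symm r (η : F)).symm.trans (e.symm_apply_eq.2 hv)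

variable [MeasurableSpace E] [BorelSpace E] [MeasurableSpace F] [BorelSpace F]

lemma measurePreserving_unitSphereMap {μ : Measure E} {ν : Measure F} {e : E ≃ₗᵢ[ℝ] F}
    (he : MeasurePreserving e μ ν) :
    MeasurePreserving (unitSphereMap e) μ.toSphere ν.toSphere where
  measurable := (continuous_unitSphereMap e).measurable
  map_eq := by
    have hmeas := (continuous_unitSphereMap e).measurable
    ext I hI
    rw [Measure.map_apply hmeas hI, Measure.toSphere_apply' _ (hmeas hI),
      Measure.toSphere_apply' _ hI, smul_coe_image_preimage_unitSphereMap,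
      he.measure_preimage_emb e.toHomeomorph.measurableEmbedding, e.toLinearEquiv.finrank_eq]

end UnitSphereMap

section SphMeasure

variable {n : ℕ}

instance [NeZero n] : IsProbabilityMeasure (sphMeasure n) := by
  have : NeZero (volume : Measure (Eucl n)).toSphere := ⟨Measure.toSphere_ne_zero _⟩
  unfold sphMeasure
  infer_instance

lemma measurePreserving_unitSphereMap_sphMeasure (e : Eucl n ≃ₗᵢ[ℝ] Eucl n) :
    MeasurePreserving (unitSphereMap e) (sphMeasure n) (sphMeasure n) :=
  (measurePreserving_unitSphereMap e.measurePreserving).smul_measure _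

end SphMeasure

lemma arg_neg_pos_iff {z : ℂ} (hz : z ≠ 0) : 0 < (-z).arg ↔ z.arg ≤ 0 := by
  have arg_nonpos_iff (w : ℂ) : w.arg ≤ 0 ↔ w.im < 0 ∨ 0 ≤ w.re ∧ w.im = 0 := by
    rw [le_iff_lt_or_eq, Complex.arg_neg_iff, Complex.arg_eq_zero_iff]
  have hz' : ¬(z.re = 0 ∧ z.im = 0) := fun h ↦ hz (Complex.ext h.1 h.2)
  rw [← not_le, arg_nonpos_iff, arg_nonpos_iff, Complex.neg_re, Complex.neg_im]
  grind

lemma nsmul_coe_eq_pi {m p : ℕ} {θ : ℝ} (hp : Odd p) (h : m * θ = p * Real.pi) :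
    m • (θ : Real.Angle) = Real.pi := by
  obtain ⟨k, rfl⟩ := hp
  rw [← Real.Angle.coe_nsmul, nsmul_eq_mul, h, ← nsmul_eq_mul, Real.Angle.coe_nsmul, succ_nsmul,
    mul_nsmul, Real.Angle.two_nsmul_coe_pi, nsmul_zero, zero_add]

lemma toCircle_nsmul (n : ℕ) (θ : Real.Angle) : (n • θ).toCircle = θ.toCircle ^ n := by
  induction n with
  | zero => simp
  | succ n ih => rw [succ_nsmul, Real.Angle.toCircle_add, ih, pow_succ]

section Plane

variable {V : Type*} [NormedAddCommGroup V] [InnerProductSpace ℝ V]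
  [Fact (Module.finrank ℝ V = 2)] (o : Orientation ℝ V (Fin 2))

lemma inner_rotation_right_self (θ : Real.Angle) (v : V) :
    ⟪v, o.rotation θ v⟫ = ‖v‖ ^ 2 * θ.cos := by
  simp [o.rotation_apply, inner_add_right, inner_smul_right, mul_comm]

lemma inner_eq_norm_mul_norm_mul_cos_iff {v w : V} (h : ‖v‖ = ‖w‖) (θ : Real.Angle) :
    ⟪v, w⟫ = ‖v‖ * ‖w‖ * θ.cos ↔ w = o.rotation θ v ∨ v = o.rotation θ w := by
  constructor
  · intro hvw
    rcases eq_or_ne v 0 with rfl | hv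
    · rw [norm_zero, eq_comm, norm_eq_zero] at h
      exact .inl (by rw [h, map_zero])
    have hw : w ≠ 0 := norm_ne_zero_iff.1 (h ▸ norm_ne_zero_iff.2 hv)
    have hcos : (o.oangle v w).cos = θ.cos := by
      rw [o.cos_oangle_eq_inner_div_norm_mul_norm hv hw, hvw]
      field_simp
    have hrot := (o.rotation_oangle_eq_iff_norm_eq v w).2 h
    rcases Real.Angle.cos_eq_iff_eq_or_eq_neg.1 hcos with hθ | hθ
    · exact .inl (hθ ▸ hrot.symm)
    · right
      rw [hθ, ← o.rotation_symm] at hrot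
      exact (LinearIsometryEquiv.symm_apply_eq _).1 hrot
  · rintro (rfl | rfl)
    · rw [inner_rotation_right_self, ← h, sq]
    · rw [real_inner_comm, inner_rotation_right_self, h, sq]

lemma forall_inner_ne_cos_iff_disjoint_preimage (θ : Real.Angle) (I : Set (sphere (0 : V) 1)) :
    (∀ ξ ∈ I, ∀ η ∈ I, ⟪(ξ : V), (η : V)⟫ ≠ θ.cos) ↔
      Disjoint I (unitSphereMap (o.rotation θ) ⁻¹' I) := by
  have hinner (ξ η : sphere (0 : V) 1) : ⟪(ξ : V), (η : V)⟫ = θ.cos ↔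
      η = unitSphereMap (o.rotation θ) ξ ∨ ξ = unitSphereMap (o.rotation θ) η := by
    simpa [Subtype.ext_iff] using
      inner_eq_norm_mul_norm_mul_cos_iff o (v := (ξ : V)) (w := (η : V)) (by simp) θ
  simp only [ne_eq, hinner, Set.disjoint_left, Set.mem_preimage]
  constructor
  · exact fun h ξ hξ hrot ↦ h ξ hξ _ hrot (.inl rfl)
  · rintro h ξ hξ η hη (rfl | rfl)
    exacts [h hξ hη, h hη hξ]

/-- The alternating sectors of angle `π / m` around the origin, counted from the direction of `v`:
those vectors whose angle with `v`, multiplied by `m`, lies in `(0, π]` modulo `2π`. For `v ≠ 0`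
the Kähler form `o.kahler v` identifies the plane with `ℂ` up to scaling and sends `v` to the
positive real axis. -/
def alternatingSectors (v : V) (m : ℕ) : Set V :=
  {w | 0 < (o.kahler v w ^ m).arg}

lemma measurableSet_alternatingSectors [MeasurableSpace V] [BorelSpace V] (v : V) (m : ℕ) :
    MeasurableSet (alternatingSectors o v m) := by
  have := FiniteDimensional.of_fact_finrank_eq_two (K := ℝ) (V := V)
  have hkahler : Measurable (o.kahler v) :=
    (o.kahler v).continuous_of_finiteDimensional.measurable
  exact measurableSet_lt measurable_const (Complex.measurable_arg.comp (hkahler.pow_const m))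

lemma rotation_mem_alternatingSectors_iff {v w : V} (hv : v ≠ 0) (hw : w ≠ 0) {m : ℕ}
    {θ : Real.Angle} (hθ : m • θ = Real.pi) :
    o.rotation θ w ∈ alternatingSectors o v m ↔ w ∉ alternatingSectors o v m := by
  have hneg : o.kahler v (o.rotation θ w) ^ m = -o.kahler v w ^ m := by
    rw [o.kahler_rotation_right, mul_pow, ← Circle.coe_pow, ← toCircle_nsmul, hθ,
      Real.Angle.coe_toCircle]
    simp
  simp only [alternatingSectors, Set.mem_ofPred_eq, hneg, not_lt]
  exact arg_neg_pos_iff (pow_ne_zero m (o.kahler_ne_zero hv hw))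

lemma preimage_rotation_alternatingSectors_eq_compl {v : V} (hv : v ≠ 0) {m : ℕ}
    {θ : Real.Angle} (hθ : m • θ = Real.pi) :
    unitSphereMap (o.rotation θ) ⁻¹' ((↑) ⁻¹' alternatingSectors o v m) =
      ((↑) ⁻¹' alternatingSectors o v m)ᶜ :=
  Set.ext fun ξ ↦ rotation_mem_alternatingSectors_iff o hv (ne_zero_of_mem_unit_sphere ξ) hθ

theorem circle_sup_q_even_general [MeasurableSpace V] [BorelSpace V]
    (μ : Measure (sphere (0 : V) 1)) [IsProbabilityMeasure μ] {x : ℝ}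
    (hx : x ∈ Set.Icc (-1 : ℝ) 1)
    (hμ : MeasurePreserving (unitSphereMap (o.rotation (Real.arccos x))) μ μ) {p q : ℕ}
    (hq : 0 < q) (hp : Odd p) (hqeven : Even q)
    (ht : Real.arccos x / (2 * Real.pi) = (p : ℝ) / (q : ℝ)) :
    IsGreatest {a : ℝ≥0∞ | ∃ I : Set (sphere (0 : V) 1),
      MeasurableSet I ∧ (∀ ξ ∈ I, ∀ η ∈ I, ⟪(ξ : V), (η : V)⟫ ≠ x) ∧ μ I = a} (1 / 2) := by
  obtain ⟨m, rfl⟩ := hqeven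
  have hm : m • (Real.arccos x : Real.Angle) = Real.pi := by
    refine nsmul_coe_eq_pi hp ?_
    have : (m : ℝ) ≠ 0 := by norm_cast; lia
    field_simp at ht
    push_cast at ht
    linarith
  have havoid := forall_inner_ne_cos_iff_disjoint_preimage o (Real.arccos x)
  rw [Real.Angle.cos_coe, Real.cos_arccos hx.1 hx.2] at havoid
  simp only [havoid, ← measure_univ (μ := μ)]
  obtain ⟨v⟩ := nonempty_of_isProbabilityMeasure μ
  constructor
  · have hI : MeasurableSet ((↑) ⁻¹' alternatingSectors o (v : V) m : Set (sphere (0 : V) 1)) :=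
      measurable_subtype_coe (measurableSet_alternatingSectors o (v : V) m)
    have hcompl :=
      preimage_rotation_alternatingSectors_eq_compl o (ne_zero_of_mem_unit_sphere v) hm
    exact ⟨_, hI, hcompl ▸ disjoint_compl_right,
      measure_eq_half_of_preimage_eq_compl hμ hI.nullMeasurableSet hcompl⟩
  · rintro _ ⟨I, hI, hdisj, rfl⟩
    exact measure_le_half_of_disjoint_preimage hμ hI.nullMeasurableSet hdisj

end Plane

/-- If `x ∈ [-1,1]` and `t = arccos x / (2π)` is rational, `t = p/q` with `p, q` coprime and
`q` even, then the supremum of the normalised measures of measurable `{x}`-avoiding subsets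
of the unit circle `S^1` equals `1/2`, and it is attained by some measurable `{x}`-avoiding
set. -/
theorem circle_sup_q_even (x : ℝ) (hx : x ∈ Set.Icc (-1 : ℝ) 1) (p q : ℕ)
    (hq : 0 < q) (hpq : Nat.Coprime p q) (hqeven : Even q)
    (ht : Real.arccos x / (2 * Real.pi) = (p : ℝ) / (q : ℝ)) :
    IsGreatest {m : ℝ≥0∞ | ∃ I : Set (Sph 2),
      MeasurableSet I ∧ Avoids {x} I ∧ sphMeasure 2 I = m} (1 / 2) := by
  have : Fact (Module.finrank ℝ (Eucl 2) = 2) := ⟨finrank_euclideanSpace_fin⟩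
  have hp : Odd p := Nat.coprime_two_right.1 (hpq.coprime_dvd_right hqeven.two_dvd)
  exact circle_sup_q_even_general (EuclideanSpace.basisFun (Fin 2) ℝ).toBasis.orientation _ hx
    (measurePreserving_unitSphereMap_sphMeasure _) hq hp hqeven ht
end
end

section
/- Let n ≥ 3 and let X be an arbitrary subset of [-1,1]. Then there exists a Lebesgue measurable X-avoiding set I ⊆ S^{n-1} attaining the supremum α_X(n); that is, I is X-avoiding, measurable, and λ(I) ≥ λ(J) for every Lebesgue measurable X-avoiding set J ⊆ S^{n-1}. -/
open MeasureTheory Metric Matrix Filter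
open scoped RealInnerProductSpace ENNReal

noncomputable section

/-!
Take avoiding sets `J k` whose measures tend to the supremum and let `f` be a weak-* limit of a
subsequence of their indicators; then `∫ f` is the supremum. If `X` contains an inner product
`t = ⟪x, y⟫` with `-1 < t < 1`, the correlations `∫ 𝟙_{J k}(g x) 𝟙_{J k}(g y) dg` over the
orthogonal group vanish, and they converge to `∫ f(g x) f(g y) dg`: for `n ≥ 3` the points at inner
product `t` with `x` form a circle, two random points of a randomly rotated circle have a joint law
absolutely continuous with respect to the product measure, and Cauchy–Schwarz bounds
`(∫ u(g x) h(g y) dg)²` by the integral of `h ⊗ h` against that law. Hence `f(g x) f(g y) = 0` for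
almost every `g`, and a density theorem for the action trims `{f > 0}` by a null set so that it
avoids all such `t`. If `1 ∈ X`, only the empty set is avoiding. If `-1 ∈ X`, choose one point from
each antipodal pair; nothing is lost in measure because `f(x) + f(-x) ≤ 1`.
-/

/-! ### Weak-* null sequences of bounded functions -/

section WeakStar

open scoped Topology

variable {α β : Type*} [MeasurableSpace α] [MeasurableSpace β] {μ : Measure α} {ν : Measure β}

lemma integrable_of_abs_le_one [IsFiniteMeasure μ] {f : α → ℝ} (hf : Measurable f)
    (hb : ∀ x, |f x| ≤ 1) : Integrable f μ :=
  .of_bound hf.aestronglyMeasurable 1 (.of_forall hb)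

lemma abs_mul_le_one {a b : ℝ} (ha : |a| ≤ 1) (hb : |b| ≤ 1) : |a * b| ≤ 1 := by
  rw [abs_mul]
  exact mul_le_one₀ ha (abs_nonneg b) hb

lemma abs_integral_le_one [IsProbabilityMeasure μ] {f : α → ℝ} (hb : ∀ x, |f x| ≤ 1) :
    |∫ x, f x ∂μ| ≤ 1 := by
  simpa using norm_integral_le_of_norm_le_const (μ := μ) (f := f) (C := 1) (.of_forall hb)

lemma integral_le_measureReal_of_ae_eq_zero [IsFiniteMeasure μ] {f : α → ℝ}
    (hfi : Integrable f μ) (hf : ∀ x, f x ≤ 1) {K : Set α}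
    (hK : ∀ᵐ x ∂μ, x ∉ K → f x = 0) : ∫ x, f x ∂μ ≤ μ.real K := by
  rw [← setIntegral_eq_integral_of_ae_compl_eq_zero hK]
  exact (integral_mono hfi.integrableOn (integrable_const 1) hf).trans_eq (by simp)

/-- Weak-* convergence to `0` of a sequence in the unit ball of `L^∞(μ)`, represented by
everywhere bounded measurable functions and tested against indicator functions only. It is applied
to the differences between indicator functions of avoiding sets and their weak-* limit. -/
structure IsWeakStarNull (μ : Measure α) (h : ℕ → α → ℝ) : Prop where
  measurable : ∀ k, Measurable (h k)
  abs_le_one : ∀ k x, |h k x| ≤ 1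
  tendsto_setIntegral : ∀ A, MeasurableSet A → Tendsto (fun k ↦ ∫ x in A, h k x ∂μ) atTop (𝓝 0)

namespace IsWeakStarNull

variable {h : ℕ → α → ℝ}

lemma integrable_mul (hh : IsWeakStarNull μ h) (k : ℕ) {φ : α → ℝ} (hφ : Integrable φ μ) :
    Integrable (fun x ↦ φ x * h k x) μ :=
  hφ.mul_bdd (c := 1) (hh.measurable k).aestronglyMeasurable (.of_forall (hh.abs_le_one k))

lemma abs_integral_mul_sub_le (hh : IsWeakStarNull μ h) (k : ℕ) (f g : α →₁[μ] ℝ) :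
    |∫ x, f x * h k x ∂μ - ∫ x, g x * h k x ∂μ| ≤ dist f g := by
  rw [← integral_sub (hh.integrable_mul k (L1.integrable_coeFn f))
    (hh.integrable_mul k (L1.integrable_coeFn g)), dist_eq_norm, L1.norm_eq_integral_norm,
    ← Real.norm_eq_abs]
  refine norm_integral_le_of_norm_le (L1.integrable_coeFn (f - g)).norm ?_
  filter_upwards [Lp.coeFn_sub f g] with x hx
  rw [← sub_mul, norm_mul, hx]
  exact mul_le_of_le_one_right (norm_nonneg _) (hh.abs_le_one k x)

lemma isClosed_setOf_tendsto_integral_mul (hh : IsWeakStarNull μ h) :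
    IsClosed {f : α →₁[μ] ℝ | Tendsto (fun k ↦ ∫ x, f x * h k x ∂μ) atTop (𝓝 0)} := by
  refine isClosed_of_closure_subset fun f hf ↦ Metric.tendsto_atTop.mpr fun ε hε ↦ ?_
  obtain ⟨g, hg, hfg⟩ := Metric.mem_closure_iff.mp hf (ε / 2) (half_pos hε)
  obtain ⟨N, hN⟩ := Metric.tendsto_atTop.mp hg (ε / 2) (half_pos hε)
  refine ⟨N, fun k hk ↦ ?_⟩
  calc dist (∫ x, f x * h k x ∂μ) 0
      ≤ dist (∫ x, f x * h k x ∂μ) (∫ x, g x * h k x ∂μ) + dist (∫ x, g x * h k x ∂μ) 0 :=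
        dist_triangle _ _ _
    _ < ε / 2 + ε / 2 :=
        add_lt_add ((hh.abs_integral_mul_sub_le k f g).trans_lt hfg) (hN k hk)
    _ = ε := add_halves ε

lemma tendsto_integral_mul (hh : IsWeakStarNull μ h) {φ : α → ℝ} (hφ : Integrable φ μ) :
    Tendsto (fun k ↦ ∫ x, φ x * h k x ∂μ) atTop (𝓝 0) := by
  refine Integrable.induction
    (fun φ : α → ℝ ↦ Tendsto (fun k ↦ ∫ x, φ x * h k x ∂μ) atTop (𝓝 0)) ?_ ?_
    hh.isClosed_setOf_tendsto_integral_mul ?_ hφ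
  · intro c s hs _
    have hconst : ∀ k, ∫ x, s.indicator (fun _ ↦ c) x * h k x ∂μ = c * ∫ x in s, h k x ∂μ := by
      intro k
      rw [← integral_const_mul, ← integral_indicator hs]
      simp_rw [Set.indicator_mul_left]
    simpa only [hconst, mul_zero] using (hh.tendsto_setIntegral s hs).const_mul c
  · intro f g _ hf hg hf₀ hg₀
    have hadd : ∀ k, ∫ x, (f + g) x * h k x ∂μ = ∫ x, f x * h k x ∂μ + ∫ x, g x * h k x ∂μ := by
      intro k
      rw [← integral_add (hh.integrable_mul k hf) (hh.integrable_mul k hg)]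
      simp_rw [Pi.add_apply, add_mul]
    simpa only [hadd, add_zero] using hf₀.add hg₀
  · intro f g hfg _ hf₀
    refine hf₀.congr fun k ↦ integral_congr_ae ?_
    filter_upwards [hfg] with x hx
    rw [hx]

lemma tendsto_integral_of_absolutelyContinuous [SigmaFinite μ] (hh : IsWeakStarNull μ h)
    {ρ : Measure α} [IsFiniteMeasure ρ] (hρ : ρ ≪ μ) :
    Tendsto (fun k ↦ ∫ x, h k x ∂ρ) atTop (𝓝 0) := by
  simp_rw [← integral_rnDeriv_smul hρ, smul_eq_mul]
  exact hh.tendsto_integral_mul Measure.integrable_toReal_rnDeriv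

lemma prod [IsFiniteMeasure μ] [IsFiniteMeasure ν] (hh : IsWeakStarNull μ h)
    {u : ℕ → β → ℝ} (hu : ∀ k, Measurable (u k)) (hu₁ : ∀ k y, |u k y| ≤ 1) :
    IsWeakStarNull (ν.prod μ) (fun k p ↦ u k p.1 * h k p.2) := by
  have hmeas : ∀ k, Measurable fun p : β × α ↦ u k p.1 * h k p.2 := fun k ↦
    ((hu k).comp measurable_fst).mul ((hh.measurable k).comp measurable_snd)
  have hbound : ∀ k (p : β × α), |u k p.1 * h k p.2| ≤ 1 := fun k p ↦
    abs_mul_le_one (hu₁ k _) (hh.abs_le_one k _)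
  refine ⟨hmeas, hbound, fun A hA ↦ ?_⟩
  have hintegrable : ∀ k, Integrable (A.indicator fun p : β × α ↦ u k p.1 * h k p.2) (ν.prod μ) :=
    fun k ↦ (integrable_of_abs_le_one (hmeas k) (hbound k)).indicator hA
  have hsection : ∀ k y, ∫ x, A.indicator (fun p : β × α ↦ u k p.1 * h k p.2) (y, x) ∂μ =
      u k y * ∫ x in Prod.mk y ⁻¹' A, h k x ∂μ := fun k y ↦ by
    rw [← integral_const_mul, ← integral_indicator (measurable_prodMk_left hA)]
    rfl
  simp_rw [← integral_indicator hA, fun k ↦ integral_prod _ (hintegrable k)]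
  rw [← integral_zero β ℝ (μ := ν)]
  refine tendsto_integral_of_dominated_convergence (fun _ ↦ 1 * μ.real Set.univ)
    (fun k ↦ (hintegrable k).integral_prod_left.aestronglyMeasurable) (integrable_const _)
    (fun k ↦ .of_forall fun y ↦ norm_integral_le_of_norm_le_const <| .of_forall fun x ↦
      (norm_indicator_le_norm_self _ _).trans (hbound k (y, x))) (.of_forall fun y ↦ ?_)
  simp_rw [hsection]
  refine squeeze_zero_norm (fun k ↦ ?_) (tendsto_zero_iff_norm_tendsto_zero.mp
    (hh.tendsto_setIntegral _ (measurable_prodMk_left (x := y) hA)))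
  rw [norm_mul]
  exact mul_le_of_le_one_left (norm_nonneg _) (hu₁ k y)

end IsWeakStarNull

lemma exists_subseq_tendsto_inner {H : Type*} [NormedAddCommGroup H] [InnerProductSpace ℝ H]
    [CompleteSpace H] [TopologicalSpace.SeparableSpace H] {v : ℕ → H} {C : ℝ}
    (hv : ∀ k, ‖v k‖ ≤ C) :
    ∃ (w : H) (φ : ℕ → ℕ), StrictMono φ ∧
      ∀ z, Tendsto (fun k ↦ ⟪v (φ k), z⟫) atTop (𝓝 ⟪w, z⟫) := by
  let L : ℕ → WeakDual ℝ H := fun k ↦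
    StrongDual.toWeakDual (InnerProductSpace.toDual ℝ H (v k))
  have hL : ∀ k, L k ∈ WeakDual.toStrongDual ⁻¹' closedBall (0 : StrongDual ℝ H) C := by
    intro k
    rw [Set.mem_preimage, mem_closedBall_zero_iff]
    exact ((InnerProductSpace.toDual ℝ H).norm_map (v k)).trans_le (hv k)
  obtain ⟨ℓ, -, φ, hφ, hlim⟩ := WeakDual.isSeqCompact_closedBall ℝ H 0 C hL
  refine ⟨(InnerProductSpace.toDual ℝ H).symm (WeakDual.toStrongDual ℓ), φ, hφ, fun z ↦ ?_⟩
  rw [InnerProductSpace.toDual_symm_apply]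
  exact ((WeakDual.eval_continuous z).tendsto ℓ).comp hlim

variable [MeasurableSpace.CountablyGenerated α] [IsFiniteMeasure μ]

lemma exists_subseq_tendsto_setIntegral {F : ℕ → α → ℝ} (hFm : ∀ k, Measurable (F k))
    (hF : ∀ k x, |F k x| ≤ 1) :
    ∃ (f : α → ℝ) (φ : ℕ → ℕ), Measurable f ∧ Integrable f μ ∧ StrictMono φ ∧
      ∀ A, MeasurableSet A →
        Tendsto (fun k ↦ ∫ x in A, F (φ k) x ∂μ) atTop (𝓝 (∫ x in A, f x ∂μ)) := by
  have : Fact ((2 : ℝ≥0∞) ≠ ∞) := ⟨by simp⟩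
  have hmem : ∀ k, MemLp (F k) 2 μ := fun k ↦
    .of_bound (hFm k).aestronglyMeasurable 1 (.of_forall (hF k))
  have hnorm : ∀ k, ‖(hmem k).toLp (F k)‖ ≤ _ := fun k ↦
    Lp.norm_le_of_ae_bound zero_le_one <| by
      filter_upwards [(hmem k).coeFn_toLp] with x hx
      rw [hx]
      exact hF k x
  obtain ⟨f, φ, hφ, hlim⟩ := exists_subseq_tendsto_inner hnorm
  refine ⟨f, φ, (Lp.stronglyMeasurable f).measurable, (Lp.memLp f).integrable (by norm_num), hφ,
    fun A hA ↦ ?_⟩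
  have hinner : ∀ g : Lp ℝ 2 μ,
      ⟪g, indicatorConstLp 2 hA (measure_ne_top μ A) (1 : ℝ)⟫ = ∫ x in A, g x ∂μ := fun g ↦
    (real_inner_comm _ _).trans (L2.inner_indicatorConstLp_one hA (measure_ne_top μ A) g)
  have hlimA := hlim (indicatorConstLp 2 hA (measure_ne_top μ A) (1 : ℝ))
  simp_rw [hinner] at hlimA
  exact hlimA.congr fun k ↦ integral_congr_ae (ae_restrict_of_ae (hmem (φ k)).coeFn_toLp)

lemma exists_subseq_isWeakStarNull_sub {F : ℕ → α → ℝ} (hFm : ∀ k, Measurable (F k))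
    (hF : ∀ k x, F k x ∈ Set.Icc (0 : ℝ) 1) :
    ∃ (f : α → ℝ) (φ : ℕ → ℕ), Measurable f ∧ (∀ x, f x ∈ Set.Icc (0 : ℝ) 1) ∧ StrictMono φ ∧
      IsWeakStarNull μ (fun k x ↦ F (φ k) x - f x) := by
  have hF₁ : ∀ k x, |F k x| ≤ 1 := fun k x ↦ abs_le.mpr ⟨by linarith [(hF k x).1], (hF k x).2⟩
  have hFi : ∀ k, Integrable (F k) μ := fun k ↦ integrable_of_abs_le_one (hFm k) (hF₁ k)
  obtain ⟨f, φ, hfm, hfi, hφ, hlim⟩ := exists_subseq_tendsto_setIntegral (μ := μ) hFm hF₁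
  have hle : ∀ᵐ x ∂μ, f x ≤ 1 :=
    ae_le_of_forall_setIntegral_le hfi (integrable_const _) fun A hA _ ↦
      le_of_tendsto' (hlim A hA) fun k ↦
        integral_mono (hFi _).integrableOn (integrable_const _) fun x ↦ (hF _ x).2
  have hge : ∀ᵐ x ∂μ, 0 ≤ f x :=
    ae_le_of_forall_setIntegral_le (integrable_const _) hfi fun A hA _ ↦
      ge_of_tendsto' (hlim A hA) fun k ↦
        integral_mono (integrable_const _) (hFi _).integrableOn fun x ↦ (hF _ x).1
  let f' : α → ℝ := fun x ↦ max 0 (min 1 (f x))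
  have hf'm : Measurable f' := measurable_const.max (measurable_const.min hfm)
  have hf' : ∀ x, f' x ∈ Set.Icc (0 : ℝ) 1 := fun x ↦
    ⟨le_max_left _ _, max_le zero_le_one (min_le_left _ _)⟩
  have hae : f' =ᵐ[μ] f := by
    filter_upwards [hle, hge] with x hx₁ hx₀
    rw [show f' x = max 0 (min 1 (f x)) from rfl, min_eq_right hx₁, max_eq_right hx₀]
  refine ⟨f', φ, hf'm, hf', hφ, fun k ↦ (hFm _).sub hf'm, fun k x ↦ abs_le.mpr ?_,
    fun A hA ↦ ?_⟩
  · constructor <;> linarith [(hF (φ k) x).1, (hF (φ k) x).2, (hf' x).1, (hf' x).2]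
  · have hsplit : ∀ k, ∫ x in A, (F (φ k) x - f' x) ∂μ =
        ∫ x in A, F (φ k) x ∂μ - ∫ x in A, f x ∂μ := fun k ↦ by
      rw [integral_sub (hFi _).integrableOn (hfi.congr hae.symm).integrableOn,
        integral_congr_ae (ae_restrict_of_ae hae)]
    simpa only [hsplit, sub_self] using (hlim A hA).sub_const (∫ x in A, f x ∂μ)

end WeakStar

/-! ### Probability-preserving actions of compact groups -/

section CompactGroupAction

open scoped Topology symmDiff

lemma exists_isMulRightInvariant_isProbabilityMeasure (G : Type*) [Group G] [TopologicalSpace G]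
    [IsTopologicalGroup G] [CompactSpace G] [MeasurableSpace G] [BorelSpace G] :
    ∃ ν : Measure G, ν.IsMulRightInvariant ∧ IsProbabilityMeasure ν ∧ ν.IsOpenPosMeasure := by
  let μ : Measure G := .haarMeasure ⊤
  refine ⟨μ.inv, inferInstance, ⟨?_⟩, ⟨fun U hU hne ↦ ?_⟩⟩
  · rw [Measure.inv_apply, Set.inv_univ]
    exact Measure.haarMeasure_self
  · rw [Measure.inv_apply]
    exact hU.inv.measure_ne_zero μ hne.inv

variable {G S : Type*} [Group G] [MeasurableSpace G] [MeasurableSpace S] [MulAction G S]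
  {ν : Measure G} [IsProbabilityMeasure ν] {μ : Measure S}

section Measurable

variable [MeasurableSMul₂ G S]

lemma measurePreserving_smul_left [MeasurableMul₂ G] [ν.IsMulRightInvariant]
    [SMulInvariantMeasure G S μ] [IsProbabilityMeasure μ] [MulAction.IsPretransitive G S] (x : S) :
    MeasurePreserving (fun g : G ↦ g • x) ν μ := by
  refine ⟨measurable_smul_const x, Measure.ext fun s hs ↦ ?_⟩
  rw [Measure.map_apply (measurable_smul_const x) hs]
  have horbit : ∀ y : S, ν {g | g • y ∈ s} = ν {g | g • x ∈ s} := fun y ↦ by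
    obtain ⟨k, rfl⟩ := MulAction.exists_smul_eq G x y
    simp_rw [← mul_smul]
    exact measure_preimage_mul_right ν k {g | g • x ∈ s}
  calc ν {g | g • x ∈ s} = ∫⁻ y, ν {g | g • y ∈ s} ∂μ := by simp [horbit]
    _ = (ν.prod μ) {p | p.1 • p.2 ∈ s} := (Measure.prod_apply_symm (measurable_smul hs)).symm
    _ = ∫⁻ g, μ ((g • ·) ⁻¹' s) ∂ν := Measure.prod_apply (measurable_smul hs)
    _ = μ s := by simp [measure_preimage_smul]

lemma setLIntegral_measure_smul_notMem_le [SFinite μ] {J : Set S} (hJ : MeasurableSet J)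
    {ε : ℝ≥0∞} (hε : ∀ᵐ g ∂ν, μ {x | x ∈ J ∧ g • x ∉ J} ≤ ε) :
    ∫⁻ x in J, ν {g | g • x ∉ J} ∂μ ≤ ε := by
  have hmeas : MeasurableSet {p : G × S | p.1 • p.2 ∉ J} := measurable_smul hJ.compl
  calc ∫⁻ x in J, ν {g | g • x ∉ J} ∂μ = (ν.prod (μ.restrict J)) {p | p.1 • p.2 ∉ J} :=
        (Measure.prod_apply_symm hmeas).symm
    _ = ∫⁻ g, μ.restrict J {x | g • x ∉ J} ∂ν := Measure.prod_apply hmeas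
    _ ≤ ∫⁻ _, ε ∂ν := by
        refine lintegral_mono_ae (hε.mono fun g hg ↦ ?_)
        rwa [Measure.restrict_apply' hJ, Set.inter_comm]
    _ = ε := by simp

end Measurable

variable [TopologicalSpace G] [BorelSpace G] [TopologicalSpace S] [BorelSpace S] [R1Space S]
  [ContinuousSMul G S] [SMulInvariantMeasure G S μ] [IsFiniteMeasure μ]
  [μ.InnerRegularCompactLTTop]

lemma exists_isOpen_measure_smul_notMem_le {J : Set S} (hJ : MeasurableSet J) {ε : ℝ≥0∞}
    (hε : 0 < ε) :
    ∃ U : Set G, IsOpen U ∧ 1 ∈ U ∧ ∀ g ∈ U, μ {x | x ∈ J ∧ g • x ∉ J} ≤ ε := by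
  let F : C(G, C(S, S)) := (ContinuousMap.mk (fun p : G × S ↦ p.1 • p.2) continuous_smul).curry
  have hF : ∀ g, MeasurePreserving (F g) μ μ := fun g ↦ measurePreserving_smul g μ
  have hlim : Tendsto (fun g ↦ μ ((F g ⁻¹' J) ∆ (F 1 ⁻¹' J))) (𝓝 1) (𝓝 0) :=
    tendsto_measure_symmDiff_preimage_nhds_zero (F.continuous.tendsto 1) (.of_forall hF) (hF 1)
      hJ.nullMeasurableSet (measure_ne_top μ J)
  obtain ⟨U, hU, hUo, h1⟩ := mem_nhds_iff.mp (ENNReal.tendsto_nhds_zero.mp hlim ε hε)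
  refine ⟨U, hUo, h1, fun g hg ↦ (measure_mono fun x hx ↦ Or.inr ⟨?_, hx.2⟩).trans (hU hg)⟩
  simpa [F] using hx.1

variable [ν.IsOpenPosMeasure]

lemma exists_seq_isProbabilityMeasure_measure_smul_notMem_le {J : Set S} (hJ : MeasurableSet J)
    {ε : ℕ → ℝ≥0∞} (hε : ∀ j, 0 < ε j) :
    ∃ ρ : ℕ → Measure G, ∀ j, IsProbabilityMeasure (ρ j) ∧ ρ j ≪ ν ∧
      ∀ᵐ g ∂ρ j, μ {x | x ∈ J ∧ g • x ∉ J} ≤ ε j := by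
  choose U hUo hU₁ hU using fun j ↦ exists_isOpen_measure_smul_notMem_le (G := G) (μ := μ) hJ (hε j)
  refine ⟨fun j ↦ ProbabilityTheory.cond ν (U j), fun j ↦
    ⟨ProbabilityTheory.cond_isProbabilityMeasure ((hUo j).measure_ne_zero ν ⟨1, hU₁ j⟩),
      ProbabilityTheory.cond_absolutelyContinuous, ?_⟩⟩
  filter_upwards [ProbabilityTheory.ae_cond_mem (hUo j).measurableSet] with g hg
  exact hU j g hg

/- A Lebesgue density theorem for the action: `K` consists of the points of `J` that almost stay
in `J` under most group elements near `1`. -/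
lemma exists_subset_forall_frequently_smul_mem [MeasurableSMul₂ G S] {J : Set S}
    (hJ : MeasurableSet J) :
    ∃ K ⊆ J, MeasurableSet K ∧ μ (J \ K) = 0 ∧
      ∀ x ∈ K, ∀ y ∈ K, ∃ᵐ g ∂ν, g • x ∈ J ∧ g • y ∈ J := by
  obtain ⟨ε, hε, hεsum⟩ := ENNReal.exists_pos_sum_of_countable' one_ne_zero ℕ
  obtain ⟨ρ, hρ⟩ := exists_seq_isProbabilityMeasure_measure_smul_notMem_le (μ := μ) (ν := ν) hJ hε
  have hprob : ∀ j, IsProbabilityMeasure (ρ j) := fun j ↦ (hρ j).1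
  let φ : ℕ → S → ℝ≥0∞ := fun j x ↦ ρ j {g | g • x ∉ J}
  have hφm : ∀ j, Measurable (φ j) := fun j ↦
    measurable_measure_prodMk_right (measurable_smul hJ.compl)
  have hsum : ∫⁻ x in J, ∑' j, φ j x ∂μ ≠ ∞ := by
    rw [lintegral_tsum fun j ↦ (hφm j).aemeasurable]
    exact ne_top_of_lt ((ENNReal.tsum_le_tsum fun j ↦
      setLIntegral_measure_smul_notMem_le hJ (hρ j).2.2).trans_lt hεsum)
  have hΦm : Measurable fun x ↦ ∑' j, φ j x := .tsum hφm
  refine ⟨J ∩ {x | ∑' j, φ j x < ∞}, Set.inter_subset_left,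
    hJ.inter (measurableSet_lt hΦm measurable_const), ?_, ?_⟩
  · rw [Set.sdiff_self_inter, measure_eq_zero_iff_ae_notMem]
    filter_upwards [(ae_restrict_iff' hJ).mp (ae_lt_top hΦm hsum)] with x hx
    exact fun hxK ↦ hxK.2 (hx hxK.1)
  · rintro x ⟨-, hx⟩ y ⟨-, hy⟩ hnot
    have hlim : Tendsto (fun j ↦ φ j x + φ j y) atTop (𝓝 0) := by
      simpa using (ENNReal.tendsto_atTop_zero_of_tsum_ne_top hx.ne).add
        (ENNReal.tendsto_atTop_zero_of_tsum_ne_top hy.ne)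
    obtain ⟨j, hj⟩ := (hlim.eventually_lt_const one_pos).exists
    refine hj.not_ge ?_
    calc 1 = ρ j Set.univ := measure_univ.symm
      _ ≤ ρ j ({g | g • x ∉ J} ∪ {g | g • y ∉ J}) := by
          refine measure_mono_ae ?_
          filter_upwards [(hρ j).2.1.ae_le hnot] with g hg _
          exact not_and_or.mp hg
      _ ≤ φ j x + φ j y := measure_union_le _ _

end CompactGroupAction

/-! ### The orthogonal group acting on the unit sphere -/

/-- The orthogonal group of a Euclidean space `E`, acting on its unit sphere. It is encoded as a
group of operators in order to carry the topology of the operator norm. -/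
abbrev OrthogonalGroup (E : Type*) [NormedAddCommGroup E] [InnerProductSpace ℝ E]
    [CompleteSpace E] : Type _ :=
  unitary (E →L[ℝ] E)

namespace OrthogonalGroup

variable {E : Type*} [NormedAddCommGroup E] [InnerProductSpace ℝ E]

section CompleteSpace

variable [CompleteSpace E]

lemma norm_smul (g : OrthogonalGroup E) (x : E) : ‖g • x‖ = ‖x‖ :=
  (Unitary.linearIsometryEquiv g).norm_map x

instance : SMul (OrthogonalGroup E) (sphere (0 : E) 1) where
  smul g x := ⟨g • (x : E), by simp [norm_smul]⟩

instance : MulAction (OrthogonalGroup E) (sphere (0 : E) 1) where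
  one_smul _ := rfl
  mul_smul _ _ _ := rfl

instance : ContinuousSMul (OrthogonalGroup E) (sphere (0 : E) 1) where
  continuous_smul := .subtype_mk ((continuous_subtype_val.comp continuous_fst).clm_apply
    (continuous_subtype_val.comp continuous_snd)) _

lemma smul_neg (g : OrthogonalGroup E) (x : sphere (0 : E) 1) : g • (-x) = -(g • x) :=
  Subtype.ext (map_neg (g : E →L[ℝ] E) (x : E))

lemma inner_smul_smul (g : OrthogonalGroup E) (x y : sphere (0 : E) 1) :
    ⟪((g • x : sphere (0 : E) 1) : E), ((g • y : sphere (0 : E) 1) : E)⟫ = ⟪(x : E), (y : E)⟫ :=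
  (Unitary.linearIsometryEquiv g).inner_map_map x y

lemma exists_smul_eq_of_inner_eq {x y z : sphere (0 : E) 1}
    (h : ⟪(x : E), (y : E)⟫ = ⟪(x : E), (z : E)⟫) :
    ∃ g : OrthogonalGroup E, g • x = x ∧ g • y = z := by
  let R := Submodule.reflection (ℝ ∙ ((y : E) - z))ᗮ
  refine ⟨Unitary.linearIsometryEquiv.symm R, Subtype.ext (?_ : R x = x),
    Subtype.ext (Submodule.reflection_sub ?_)⟩
  · rw [Submodule.reflection_eq_self_iff, Submodule.mem_orthogonal_singleton_iff_inner_left,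
      inner_sub_right, h, sub_self]
  · rw [norm_eq_of_mem_sphere, norm_eq_of_mem_sphere]

instance : MulAction.IsPretransitive (OrthogonalGroup E) (sphere (0 : E) 1) where
  exists_smul_eq y z :=
    let R := Submodule.reflection (ℝ ∙ ((y : E) - z))ᗮ
    ⟨Unitary.linearIsometryEquiv.symm R, Subtype.ext (Submodule.reflection_sub (by simp))⟩

lemma exists_smul_pair_eq {x y x' y' : sphere (0 : E) 1}
    (h : ⟪(x : E), (y : E)⟫ = ⟪(x' : E), (y' : E)⟫) :
    ∃ g : OrthogonalGroup E, g • x = x' ∧ g • y = y' := by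
  obtain ⟨g, rfl⟩ := MulAction.exists_smul_eq (OrthogonalGroup E) x x'
  obtain ⟨k, hkx, hky⟩ := exists_smul_eq_of_inner_eq ((inner_smul_smul g x y).trans h)
  exact ⟨k * g, by rw [mul_smul, hkx], by rw [mul_smul, hky]⟩

end CompleteSpace

variable [FiniteDimensional ℝ E]

instance : CompactSpace (OrthogonalGroup E) := by
  refine isCompact_iff_compactSpace.mp (Metric.isCompact_of_isClosed_isBounded isClosed_unitary
    ((Metric.isBounded_closedBall (x := (0 : E →L[ℝ] E)) (r := 1)).subset fun g hg ↦ ?_))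
  rw [mem_closedBall_zero_iff]
  exact ContinuousLinearMap.opNorm_le_bound _ zero_le_one fun x ↦
    (one_mul ‖x‖).symm ▸ (norm_smul ⟨g, hg⟩ x).le

variable [MeasurableSpace E] [BorelSpace E]

open scoped Pointwise in
instance : SMulInvariantMeasure (OrthogonalGroup E) (sphere (0 : E) 1)
    (volume : Measure E).toSphere where
  measure_preimage_smul g s hs := by
    let e := Unitary.linearIsometryEquiv g
    have hm : MeasurableSet ((g • ·) ⁻¹' s) := measurable_const_smul g hs
    have hcone : Set.Ioo (0 : ℝ) 1 • (Subtype.val '' ((g • ·) ⁻¹' s)) =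
        e ⁻¹' (Set.Ioo (0 : ℝ) 1 • (Subtype.val '' s)) := by
      ext z
      simp only [Set.mem_smul, Set.mem_preimage, Set.mem_image]
      constructor
      · rintro ⟨r, hr, _, ⟨x, hx, rfl⟩, rfl⟩
        exact ⟨r, hr, _, ⟨g • x, hx, rfl⟩, (e.map_smul r _).symm⟩
      · rintro ⟨r, hr, _, ⟨x, hx, rfl⟩, hz⟩
        refine ⟨r, hr, _, ⟨g⁻¹ • x, by rwa [smul_inv_smul], rfl⟩, e.injective ?_⟩
        rw [← hz, e.map_smul]
        exact congrArg (r • Subtype.val ·) (smul_inv_smul g x)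
    rw [Measure.toSphere_apply' _ hs, Measure.toSphere_apply' _ hm, hcone,
      e.measurePreserving.measure_preimage_emb e.toHomeomorph.measurableEmbedding]

end OrthogonalGroup

/-! ### Circles on the sphere -/

lemma quasiMeasurePreserving_of_ae_deriv_ne_zero {f : ℝ → ℝ} (hf : ContDiff ℝ 1 f)
    (hf₀ : ∀ᵐ x, deriv f x ≠ 0) : Measure.QuasiMeasurePreserving f volume volume := by
  refine ⟨hf.continuous.measurable, Measure.AbsolutelyContinuous.mk fun s hs hs₀ ↦ ?_⟩
  rw [Measure.map_apply hf.continuous.measurable hs, ← Measure.measure_inter_eq_of_ae hf₀]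
  refine measure_null_of_locally_null _ fun x ⟨hx, _⟩ ↦ ?_
  have hstrict : HasStrictDerivAt f (deriv f x) x := hf.contDiffAt.hasStrictDerivAt one_ne_zero
  let e := (hstrict.hasStrictFDerivAt_equiv hx).toOpenPartialHomeomorph f
  let D : Set ℝ := {y ∈ e.target | deriv f (e.symm y) ≠ 0 ∧ y ∈ s}
  have hD : DifferentiableOn ℝ e.symm D := fun y hy ↦
    (e.hasDerivAt_symm hy.1 hy.2.1
      (hf.differentiable one_ne_zero _).hasDerivAt).differentiableAt.differentiableWithinAt
  refine ⟨_, inter_mem_nhdsWithin _ (e.open_source.mem_nhds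
    (hstrict.hasStrictFDerivAt_equiv hx).mem_toOpenPartialHomeomorph_source), ?_⟩
  refine measure_mono_null ?_ (addHaar_image_eq_zero_of_differentiableOn_of_addHaar_eq_zero
    volume hD (measure_mono_null (fun _ hy ↦ hy.2.2) hs₀))
  rintro z ⟨⟨hz, hzs⟩, hze⟩
  have hinv : e.symm (e z) = z := e.left_inv hze
  exact ⟨e z, ⟨e.map_source hze, by rwa [hinv], hzs⟩, hinv⟩

lemma quasiMeasurePreserving_add_mul_cos (a : ℝ) {b : ℝ} (hb : b ≠ 0) :
    Measure.QuasiMeasurePreserving (fun θ ↦ a + b * Real.cos θ) volume volume := by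
  refine quasiMeasurePreserving_of_ae_deriv_ne_zero (by fun_prop) ?_
  have hcount : {θ | Real.sin θ = 0}.Countable :=
    (Set.countable_range fun k : ℤ ↦ k * Real.pi).mono fun θ ↦ Real.sin_eq_zero_iff.mp
  filter_upwards [hcount.ae_notMem volume] with θ hθ
  have hderiv : deriv (fun θ ↦ a + b * Real.cos θ) θ = b * -Real.sin θ :=
    (((Real.hasDerivAt_cos θ).const_mul b).const_add a).deriv
  rw [hderiv]
  exact mul_ne_zero hb (neg_ne_zero.mpr hθ)

section Circle

variable {E : Type*} [NormedAddCommGroup E] [InnerProductSpace ℝ E]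

lemma inner_self_eq_one_of_mem_sphere (x : sphere (0 : E) 1) : ⟪(x : E), (x : E)⟫ = 1 := by
  rw [real_inner_self_eq_norm_sq, norm_eq_of_mem_sphere, one_pow]

lemma inner_mem_Icc_of_mem_sphere (x y : sphere (0 : E) 1) :
    ⟪(x : E), (y : E)⟫ ∈ Set.Icc (-1 : ℝ) 1 := by
  simpa [abs_le] using abs_real_inner_le_norm (x : E) (y : E)

variable [FiniteDimensional ℝ E]

lemma exists_orthonormal_apply_zero_eq {m : ℕ} [NeZero m] (hm : m ≤ Module.finrank ℝ E)
    (x : sphere (0 : E) 1) : ∃ e : Fin m → E, Orthonormal ℝ e ∧ e 0 = x := by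
  obtain ⟨b, hb⟩ := Orthonormal.exists_orthonormalBasis_extension_of_card_eq (𝕜 := ℝ) (E := E)
    (ι := Fin (Module.finrank ℝ E)) (Fintype.card_fin _).symm (v := fun _ ↦ (x : E))
    (s := {Fin.castLE hm 0}) ⟨fun _ ↦ norm_eq_of_mem_sphere x, fun i j hij ↦
      (hij (Subsingleton.elim i j)).elim⟩
  exact ⟨b ∘ Fin.castLE hm, b.orthonormal.comp _ (Fin.castLE_injective hm), hb _ rfl⟩

lemma exists_greatCircle (hE : 2 ≤ Module.finrank ℝ E) (x : sphere (0 : E) 1) :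
    ∃ γ : ℝ → sphere (0 : E) 1, Differentiable ℝ (fun θ ↦ (γ θ : E)) ∧
      γ 0 = x ∧ γ Real.pi = -x := by
  obtain ⟨e, he, hex⟩ := exists_orthonormal_apply_zero_eq hE x
  have hnorm : ∀ θ, Real.cos θ • e 0 + Real.sin θ • e 1 ∈ sphere (0 : E) 1 := fun θ ↦ by
    rw [mem_sphere_zero_iff_norm, ← sq_eq_sq₀ (norm_nonneg _) zero_le_one,
      ← real_inner_self_eq_norm_sq]
    simp [-inner_self_eq_norm_sq_to_K, inner_add_left,
      inner_add_right, inner_smul_left, inner_smul_right, orthonormal_iff_ite.mp he, ← sq]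
  refine ⟨fun θ ↦ ⟨_, hnorm θ⟩, ?_, Subtype.ext ?_, Subtype.ext ?_⟩
  · fun_prop
  · simp [hex]
  · simp [hex]

lemma exists_circle (hE : 3 ≤ Module.finrank ℝ E) (x : sphere (0 : E) 1) {t : ℝ}
    (ht : t ∈ Set.Icc (-1 : ℝ) 1) :
    ∃ c : ℝ → sphere (0 : E) 1, Continuous c ∧ (∀ θ, ⟪(x : E), (c θ : E)⟫ = t) ∧
      ∀ θ θ', ⟪(c θ : E), (c θ' : E)⟫ = t ^ 2 + (1 - t ^ 2) * Real.cos (θ - θ') := by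
  obtain ⟨e, he, hex⟩ := exists_orthonormal_apply_zero_eq hE x
  have hr : √(1 - t ^ 2) * √(1 - t ^ 2) = 1 - t ^ 2 :=
    Real.mul_self_sqrt (by nlinarith [ht.1, ht.2])
  let c : ℝ → E := fun θ ↦ t • e 0 + √(1 - t ^ 2) • (Real.cos θ • e 1 + Real.sin θ • e 2)
  have hinner : ∀ θ θ', ⟪c θ, c θ'⟫ = t ^ 2 + (1 - t ^ 2) * Real.cos (θ - θ') := fun θ θ' ↦ by
    simp only [c, smul_add, inner_add_left, inner_add_right, inner_smul_left, inner_smul_right,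
      conj_trivial, orthonormal_iff_ite.mp he, Fin.reduceEq, Fin.isValue, reduceIte, Real.cos_sub]
    linear_combination (Real.cos θ * Real.cos θ' + Real.sin θ * Real.sin θ') * hr
  have hnorm : ∀ θ, c θ ∈ sphere (0 : E) 1 := fun θ ↦ by
    rw [mem_sphere_zero_iff_norm, ← sq_eq_sq₀ (norm_nonneg _) zero_le_one,
      ← real_inner_self_eq_norm_sq, hinner, sub_self, Real.cos_zero]
    ring
  refine ⟨fun θ ↦ ⟨c θ, hnorm θ⟩, by fun_prop, fun θ ↦ ?_, hinner⟩
  simp [c, ← hex, inner_add_right, inner_smul_right, orthonormal_iff_ite.mp he, he.1]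

end Circle

/-! ### Pairs of points moved by a random rotation -/

section PairLaw

open OrthogonalGroup

variable {E : Type*} [NormedAddCommGroup E] [InnerProductSpace ℝ E] [FiniteDimensional ℝ E]
  [MeasurableSpace E] [BorelSpace E] {ν : Measure (OrthogonalGroup E)}

/-- The law of `(g x, g y)` for a `ν`-random rotation `g`. For a right-invariant `ν` it is the
uniform distribution on the pairs of points with the same inner product as `x` and `y`. -/
def pairLaw (ν : Measure (OrthogonalGroup E)) (x y : sphere (0 : E) 1) :
    Measure (sphere (0 : E) 1 × sphere (0 : E) 1) :=
  ν.map fun g ↦ (g • x, g • y)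

lemma measurable_smul_prod :
    Measurable fun q : (sphere (0 : E) 1 × sphere (0 : E) 1) × OrthogonalGroup E ↦
      (q.2 • q.1.1, q.2 • q.1.2) :=
  (measurable_snd.smul measurable_fst.fst).prodMk (measurable_snd.smul measurable_fst.snd)

lemma measurable_smul_pair (x y : sphere (0 : E) 1) :
    Measurable fun g : OrthogonalGroup E ↦ (g • x, g • y) :=
  (measurable_smul_const x).prodMk (measurable_smul_const y)

lemma measurable_smul_circle {c : ℝ → sphere (0 : E) 1} (hc : Continuous c) :
    Measurable fun z : OrthogonalGroup E × ℝ × ℝ ↦ (z.1 • c z.2.1, z.1 • c z.2.2) :=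
  (measurable_fst.smul (hc.measurable.comp measurable_snd.fst)).prodMk
    (measurable_fst.smul (hc.measurable.comp measurable_snd.snd))

lemma pairLaw_apply (x y : sphere (0 : E) 1) {N : Set (sphere (0 : E) 1 × sphere (0 : E) 1)}
    (hN : MeasurableSet N) : pairLaw ν x y N = ν {g | (g • x, g • y) ∈ N} :=
  Measure.map_apply (measurable_smul_pair x y) hN

lemma integral_pairLaw (x y : sphere (0 : E) 1) {u h : sphere (0 : E) 1 → ℝ} (hu : Measurable u)
    (hh : Measurable h) :
    ∫ p, u p.1 * h p.2 ∂pairLaw ν x y = ∫ g, u (g • x) * h (g • y) ∂ν :=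
  integral_map (measurable_smul_pair x y).aemeasurable
    ((hu.comp measurable_fst).mul (hh.comp measurable_snd)).aestronglyMeasurable

lemma pairLaw_eq_of_inner_eq [ν.IsMulRightInvariant] {x y x' y' : sphere (0 : E) 1}
    (h : ⟪(x : E), (y : E)⟫ = ⟪(x' : E), (y' : E)⟫) : pairLaw ν x y = pairLaw ν x' y' := by
  obtain ⟨k, rfl, rfl⟩ := exists_smul_pair_eq h
  rw [pairLaw, ← map_mul_right_eq_self ν k,
    Measure.map_map (measurable_smul_pair x y) (measurable_mul_const k), pairLaw,
    map_mul_right_eq_self]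
  simp_rw [Function.comp_def, mul_smul]

variable {N : Set (sphere (0 : E) 1 × sphere (0 : E) 1)}

lemma measurable_pairLaw_apply [SFinite ν] (hN : MeasurableSet N) :
    Measurable fun p : sphere (0 : E) 1 × sphere (0 : E) 1 ↦ pairLaw ν p.1 p.2 N := by
  simp_rw [pairLaw_apply _ _ hN]
  exact measurable_measure_prodMk_left (measurable_smul_prod hN)

variable [IsProbabilityMeasure ν] {μ : Measure (sphere (0 : E) 1)}
  [IsProbabilityMeasure μ] [SMulInvariantMeasure (OrthogonalGroup E) (sphere (0 : E) 1) μ]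

/- `O(E)` preserves `μ × μ`, so averaging over it keeps null sets null. -/
lemma ae_pairLaw_apply_eq_zero (hN : MeasurableSet N) (hN₀ : μ.prod μ N = 0) :
    ∀ᵐ p ∂μ.prod μ, pairLaw ν p.1 p.2 N = 0 := by
  simp_rw [pairLaw_apply _ _ hN, measure_eq_zero_iff_ae_notMem]
  have hset : MeasurableSet {q : (sphere (0 : E) 1 × sphere (0 : E) 1) × OrthogonalGroup E |
    (q.2 • q.1.1, q.2 • q.1.2) ∉ N} := measurable_smul_prod hN.compl
  refine (Measure.ae_ae_comm hset).mpr (.of_forall fun g ↦ ?_)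
  have hg := measurePreserving_smul g μ
  exact (hg.prod hg).quasiMeasurePreserving.ae (measure_eq_zero_iff_ae_notMem.mp hN₀)

variable [ν.IsMulRightInvariant]

lemma ae_ae_smul_of_ae {P : sphere (0 : E) 1 → Prop} (hP : MeasurableSet {y | P y})
    (hP₁ : ∀ᵐ y ∂μ, P y) {γ : ℝ → sphere (0 : E) 1} (hγ : Continuous γ) :
    ∀ᵐ g ∂ν, ∀ᵐ θ : ℝ, P (g • γ θ) := by
  have hmeas : Measurable fun q : OrthogonalGroup E × ℝ ↦ q.1 • γ q.2 :=
    measurable_fst.smul (hγ.measurable.comp measurable_snd)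
  refine (Measure.ae_ae_comm (p := fun (g : OrthogonalGroup E) θ ↦ P (g • γ θ))
    (hmeas hP)).mpr (.of_forall fun θ ↦ ?_)
  exact (measurePreserving_smul_left (γ θ)).quasiMeasurePreserving.ae hP₁

lemma volume_setOf_pairLaw_ne_zero_inter_Ioo [ν.IsOpenPosMeasure]
    (hE : 2 ≤ Module.finrank ℝ E) (hN : MeasurableSet N) (hN₀ : μ.prod μ N = 0) {r : ℝ}
    (hr : r < 1) :
    volume ({s | ∃ x y : sphere (0 : E) 1, ⟪(x : E), (y : E)⟫ = s ∧ pairLaw ν x y N ≠ 0} ∩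
      Set.Ioo (-r) r) = 0 := by
  obtain ⟨x, hx⟩ := (Measure.ae_ae_of_ae_prod (ae_pairLaw_apply_eq_zero (ν := ν) hN hN₀)).exists
  obtain ⟨γ, hγ, hγ₀, hγπ⟩ := exists_greatCircle hE x
  have hγc : Continuous γ := .subtype_mk hγ.continuous _
  have hae : ∀ᵐ g ∂ν, ∀ᵐ θ : ℝ, pairLaw ν x (g • γ θ) N = 0 :=
    ae_ae_smul_of_ae (((measurable_pairLaw_apply hN).comp measurable_prodMk_left)
      (measurableSet_singleton 0)) hx hγc
  let U : Set (OrthogonalGroup E) := {g | r < ⟪(x : E), ((g • x : sphere (0 : E) 1) : E)⟫}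
  have hU : IsOpen U := isOpen_lt continuous_const
    (continuous_const.inner (continuous_subtype_val.comp (continuous_id.smul continuous_const)))
  have hU₁ : 1 ∈ U := by simpa [U] using hr
  obtain ⟨g, hgU, hg⟩ := ((frequently_ae_mem_iff.mpr (hU.measure_ne_zero ν ⟨1, hU₁⟩)).and_eventually
    hae).exists
  let f : ℝ → ℝ := fun θ ↦ ⟪(x : E), ((g • γ θ : sphere (0 : E) 1) : E)⟫
  have hf : Differentiable ℝ f :=
    (differentiable_const _).inner ℝ ((g : E →L[ℝ] E).differentiable.comp hγ)
  have hf₀ : r < f 0 := by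
    simp only [f, hγ₀]
    exact hgU
  have hfπ : f Real.pi = -f 0 := by simp [f, hγ₀, hγπ, OrthogonalGroup.smul_neg]
  refine measure_mono_null ?_ (addHaar_image_eq_zero_of_differentiableOn_of_addHaar_eq_zero
    volume hf.differentiableOn (ae_iff.mp hg))
  rintro s ⟨⟨y, z, rfl, hs⟩, hlo, hhi⟩
  obtain ⟨θ, -, hθ⟩ := intermediate_value_Icc' Real.pi_pos.le hf.continuous.continuousOn
    ⟨by linarith, (hhi.trans hf₀).le⟩
  exact ⟨θ, by rwa [Set.mem_ofPred_eq, pairLaw_eq_of_inner_eq hθ], hθ⟩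

lemma volume_setOf_pairLaw_ne_zero [ν.IsOpenPosMeasure] (hE : 2 ≤ Module.finrank ℝ E)
    (hN : MeasurableSet N) (hN₀ : μ.prod μ N = 0) :
    volume {s | ∃ x y : sphere (0 : E) 1, ⟪(x : E), (y : E)⟫ = s ∧ pairLaw ν x y N ≠ 0} = 0 := by
  set B := {s | ∃ x y : sphere (0 : E) 1, ⟪(x : E), (y : E)⟫ = s ∧ pairLaw ν x y N ≠ 0}
  have hB : B ⊆ Set.Icc (-1) 1 := by
    rintro _ ⟨x, y, rfl, -⟩
    exact inner_mem_Icc_of_mem_sphere x y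
  have hloc : volume (B ∩ Set.Ioo (-1) 1) = 0 := by
    refine measure_null_of_locally_null _ fun s hs ↦ ?_
    obtain ⟨r, hsr, hr⟩ := exists_between (abs_lt.mpr hs.2)
    exact ⟨_, inter_mem_nhdsWithin _ (Ioo_mem_nhds (abs_lt.mp hsr).1 (abs_lt.mp hsr).2),
      measure_mono_null (Set.inter_subset_inter_left _ Set.inter_subset_left)
        (volume_setOf_pairLaw_ne_zero_inter_Ioo hE hN hN₀ hr)⟩
  rw [← Measure.restrict_eq_self volume hB, Measure.restrict_congr_set Ioo_ae_eq_Icc.symm,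
    Measure.restrict_apply' measurableSet_Ioo, hloc]

/- The inner product of two independent random points of a circle has a density, so almost surely
it avoids the null set of inner products whose pair law charges `N`. -/
lemma map_smul_circle_absolutelyContinuous [ν.IsOpenPosMeasure] (hE : 2 ≤ Module.finrank ℝ E)
    {ρ : Measure ℝ} [SFinite ρ] (hρ : ρ ≪ volume) {t : ℝ} (ht : t ∈ Set.Ioo (-1 : ℝ) 1)
    {c : ℝ → sphere (0 : E) 1} (hc : Continuous c)
    (hcc : ∀ θ θ', ⟪(c θ : E), (c θ' : E)⟫ = t ^ 2 + (1 - t ^ 2) * Real.cos (θ - θ')) :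
    (ν.prod (ρ.prod ρ)).map (fun z ↦ (z.1 • c z.2.1, z.1 • c z.2.2)) ≪ μ.prod μ := by
  have hq : Measure.QuasiMeasurePreserving
      (fun p : ℝ × ℝ ↦ t ^ 2 + (1 - t ^ 2) * Real.cos (p.1 - p.2)) (ρ.prod ρ) volume := by
    have hsub : Measure.QuasiMeasurePreserving (fun p : ℝ × ℝ ↦ p.1 - p.2) (ρ.prod ρ) volume :=
      (quasiMeasurePreserving_sub_of_right_invariant volume ρ).mono_left
        (hρ.prod Measure.AbsolutelyContinuous.rfl)
    exact (quasiMeasurePreserving_add_mul_cos (t ^ 2) (by nlinarith [ht.1, ht.2])).comp hsub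
  have hmeas := measurable_smul_circle hc
  refine Measure.AbsolutelyContinuous.mk fun N hN hN₀ ↦ ?_
  rw [Measure.map_apply hmeas hN, measure_eq_zero_iff_ae_notMem,
    Measure.ae_prod_iff_ae_ae (hmeas hN).compl, Measure.ae_ae_comm (hmeas hN).compl]
  filter_upwards [hq.ae (measure_eq_zero_iff_ae_notMem.mp
    (volume_setOf_pairLaw_ne_zero (ν := ν) hE hN hN₀))] with p hp
  have hpN : pairLaw ν (c p.1) (c p.2) N = 0 := by_contra fun hne ↦ hp ⟨_, _, hcc _ _, hne⟩
  rw [pairLaw_apply _ _ hN] at hpN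
  exact measure_eq_zero_iff_ae_notMem.mp hpN

end PairLaw

/-! ### Weak limits of pair correlations -/

lemma sq_integral_le_integral_sq {Ω : Type*} [MeasurableSpace Ω] {P : Measure Ω}
    [IsProbabilityMeasure P] {f : Ω → ℝ} (hf : MemLp f 2 P) :
    (∫ ω, f ω ∂P) ^ 2 ≤ ∫ ω, f ω ^ 2 ∂P :=
  sub_nonneg.mp ((ProbabilityTheory.variance_nonneg f P).trans_eq
    (ProbabilityTheory.variance_eq_sub hf))

lemma sq_integral_integral_mul_le {Ω Θ : Type*} [MeasurableSpace Ω] [MeasurableSpace Θ]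
    {P : Measure Ω} [IsProbabilityMeasure P] {ρ : Measure Θ} [IsProbabilityMeasure ρ]
    {a : Ω → ℝ} (ha : Measurable a) (ha₁ : ∀ ω, |a ω| ≤ 1) {b : Ω → Θ → ℝ}
    (hb : Measurable (Function.uncurry b)) (hb₁ : ∀ ω θ, |b ω θ| ≤ 1) :
    (∫ θ, ∫ ω, a ω * b ω θ ∂P ∂ρ) ^ 2 ≤
      ∫ z : Ω × Θ × Θ, b z.1 z.2.1 * b z.1 z.2.2 ∂P.prod (ρ.prod ρ) := by
  let B : Ω → ℝ := fun ω ↦ ∫ θ, b ω θ ∂ρ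
  have hB : Measurable B := hb.stronglyMeasurable.integral_prod_right.measurable
  have hB₁ : ∀ ω, |B ω| ≤ 1 := fun ω ↦ abs_integral_le_one (hb₁ ω)
  have haB : ∀ ω, |a ω * B ω| ≤ 1 := fun ω ↦ abs_mul_le_one (ha₁ ω) (hB₁ ω)
  have hab : Integrable (Function.uncurry fun θ ω ↦ a ω * b ω θ) (ρ.prod P) :=
    integrable_of_abs_le_one ((ha.comp measurable_snd).mul (hb.comp measurable_swap)) fun p ↦
      abs_mul_le_one (ha₁ p.2) (hb₁ p.2 p.1)
  have hbb : Measurable fun z : Ω × Θ × Θ ↦ b z.1 z.2.1 * b z.1 z.2.2 :=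
    (hb.comp (measurable_fst.prodMk measurable_snd.fst)).mul
      (hb.comp (measurable_fst.prodMk measurable_snd.snd))
  calc (∫ θ, ∫ ω, a ω * b ω θ ∂P ∂ρ) ^ 2
      = (∫ ω, a ω * B ω ∂P) ^ 2 := by
        rw [integral_integral_swap hab]
        simp_rw [integral_const_mul, B]
    _ ≤ ∫ ω, (a ω * B ω) ^ 2 ∂P := sq_integral_le_integral_sq
        (.of_bound (ha.mul hB).aestronglyMeasurable 1 (.of_forall haB))
    _ ≤ ∫ ω, B ω ^ 2 ∂P := by
        refine integral_mono (integrable_of_abs_le_one ((ha.mul hB).pow_const 2) fun ω ↦ ?_)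
          (integrable_of_abs_le_one (hB.pow_const 2) fun ω ↦ ?_) fun ω ↦ ?_
        · simpa only [sq] using abs_mul_le_one (haB ω) (haB ω)
        · simpa only [sq] using abs_mul_le_one (hB₁ ω) (hB₁ ω)
        · rw [mul_pow]
          exact mul_le_of_le_one_left (sq_nonneg _) ((sq_le_one_iff_abs_le_one _).mpr (ha₁ ω))
    _ = ∫ z : Ω × Θ × Θ, b z.1 z.2.1 * b z.1 z.2.2 ∂P.prod (ρ.prod ρ) := by
        rw [integral_prod _ (integrable_of_abs_le_one hbb fun z ↦
          abs_mul_le_one (hb₁ _ _) (hb₁ _ _))]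
        simp_rw [B, sq, ← integral_prod_mul]

section PairCorrelation

open scoped Topology

variable {E : Type*} [NormedAddCommGroup E] [InnerProductSpace ℝ E] [FiniteDimensional ℝ E]
  [MeasurableSpace E] [BorelSpace E] {ν : Measure (OrthogonalGroup E)} [IsProbabilityMeasure ν]
  [ν.IsMulRightInvariant]

lemma sq_integral_smul_mul_smul_le {ρ : Measure ℝ} [IsProbabilityMeasure ρ]
    {u h : sphere (0 : E) 1 → ℝ} (hu : Measurable u) (hu₁ : ∀ x, |u x| ≤ 1) (hh : Measurable h)
    (hh₁ : ∀ x, |h x| ≤ 1) {x y : sphere (0 : E) 1} {c : ℝ → sphere (0 : E) 1} (hc : Continuous c)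
    (hxc : ∀ θ, ⟪(x : E), (c θ : E)⟫ = ⟪(x : E), (y : E)⟫) :
    (∫ g, u (g • x) * h (g • y) ∂ν) ^ 2 ≤ ∫ p, h p.1 * h p.2
      ∂(ν.prod (ρ.prod ρ)).map fun z ↦ (z.1 • c z.2.1, z.1 • c z.2.2) := by
  have hrot : ∀ θ, ∫ g, u (g • x) * h (g • c θ) ∂ν = ∫ g, u (g • x) * h (g • y) ∂ν := fun θ ↦ by
    rw [← integral_pairLaw x y hu hh, ← integral_pairLaw x (c θ) hu hh,
      pairLaw_eq_of_inner_eq (hxc θ)]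
  have hb : Measurable (Function.uncurry fun (g : OrthogonalGroup E) θ ↦ h (g • c θ)) :=
    hh.comp (measurable_fst.smul (hc.measurable.comp measurable_snd))
  have hsq := sq_integral_integral_mul_le (P := ν) (ρ := ρ) (hu.comp (measurable_smul_const x))
    (fun g ↦ hu₁ (g • x)) hb fun g θ ↦ hh₁ (g • c θ)
  simp_rw [Function.comp_apply, hrot, integral_const, probReal_univ, one_smul] at hsq
  exact hsq.trans_eq (integral_map (measurable_smul_circle hc).aemeasurable
    ((hh.comp measurable_fst).mul (hh.comp measurable_snd)).aestronglyMeasurable).symm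

variable [ν.IsOpenPosMeasure] {μ : Measure (sphere (0 : E) 1)} [IsProbabilityMeasure μ]
  [SMulInvariantMeasure (OrthogonalGroup E) (sphere (0 : E) 1) μ] {x y : sphere (0 : E) 1}

lemma IsWeakStarNull.tendsto_integral_smul_mul_smul (hE : 3 ≤ Module.finrank ℝ E)
    (hxy : ⟪(x : E), (y : E)⟫ ∈ Set.Ioo (-1 : ℝ) 1) {h u : ℕ → sphere (0 : E) 1 → ℝ}
    (hh : IsWeakStarNull μ h) (hu : ∀ k, Measurable (u k)) (hu₁ : ∀ k x, |u k x| ≤ 1) :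
    Tendsto (fun k ↦ ∫ g, u k (g • x) * h k (g • y) ∂ν) atTop (𝓝 0) := by
  obtain ⟨c, hc, hxc, hcc⟩ := exists_circle hE x (Set.Ioo_subset_Icc_self hxy)
  let ρ : Measure ℝ := volume.restrict (Set.Icc 0 1)
  have : IsProbabilityMeasure ρ := ⟨by simp [ρ]⟩
  have hlim := (hh.prod hh.measurable hh.abs_le_one).tendsto_integral_of_absolutelyContinuous
    (map_smul_circle_absolutelyContinuous (ν := ν) (μ := μ) (by lia)
      (Measure.absolutelyContinuous_of_le Measure.restrict_le_self : ρ ≪ volume) hxy hc hcc)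
  have hsq := squeeze_zero (fun _ ↦ sq_nonneg _) (fun k ↦ sq_integral_smul_mul_smul_le (ν := ν)
    (ρ := ρ) (hu k) (hu₁ k) (hh.measurable k) (hh.abs_le_one k) hc hxc) hlim
  rw [tendsto_zero_iff_abs_tendsto_zero]
  simpa only [Function.comp_def, Real.sqrt_sq_eq_abs, Real.sqrt_zero] using hsq.sqrt

lemma ae_mul_smul_eq_zero (hE : 3 ≤ Module.finrank ℝ E)
    (hxy : ⟪(x : E), (y : E)⟫ ∈ Set.Ioo (-1 : ℝ) 1) {F : ℕ → sphere (0 : E) 1 → ℝ}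
    {f : sphere (0 : E) 1 → ℝ} (hFm : ∀ k, Measurable (F k)) (hF : ∀ k x, |F k x| ≤ 1)
    (hfm : Measurable f) (hf : ∀ x, f x ∈ Set.Icc (0 : ℝ) 1)
    (hFf : IsWeakStarNull μ fun k x ↦ F k x - f x)
    (hF₀ : ∀ k (g : OrthogonalGroup E), F k (g • x) * F k (g • y) = 0) :
    ∀ᵐ g ∂ν, f (g • x) * f (g • y) = 0 := by
  have hf₁ : ∀ x, |f x| ≤ 1 := fun x ↦ (abs_of_nonneg (hf x).1).trans_le (hf x).2
  have hyx : ⟪(y : E), (x : E)⟫ ∈ Set.Ioo (-1 : ℝ) 1 := by rwa [real_inner_comm]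
  have hlim := (hFf.tendsto_integral_smul_mul_smul (ν := ν) hE hxy hFm hF).add
    (hFf.tendsto_integral_smul_mul_smul (ν := ν) hE hyx (fun _ ↦ hfm) fun _ ↦ hf₁)
  have hmul : ∀ {a b : sphere (0 : E) 1 → ℝ}, Measurable a → Measurable b → (∀ x, |a x| ≤ 1) →
      (∀ x, |b x| ≤ 1) → ∀ x y, Integrable (fun g : OrthogonalGroup E ↦ a (g • x) * b (g • y)) ν :=
    fun ha hb ha₁ hb₁ x y ↦ integrable_of_abs_le_one
      ((ha.comp (measurable_smul_const x)).mul (hb.comp (measurable_smul_const y)))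
      fun g ↦ abs_mul_le_one (ha₁ _) (hb₁ _)
  have hsplit : ∀ k, ∫ g, F k (g • x) * (F k (g • y) - f (g • y)) ∂ν +
      ∫ g, f (g • y) * (F k (g • x) - f (g • x)) ∂ν = -∫ g, f (g • x) * f (g • y) ∂ν := fun k ↦ by
    rw [← integral_add (hmul (hFm k) (hFf.measurable k) (hF k) (hFf.abs_le_one k) x y)
      (hmul hfm (hFf.measurable k) hf₁ (hFf.abs_le_one k) y x), ← integral_neg]
    exact integral_congr_ae (.of_forall fun g ↦ by linear_combination hF₀ k g)
  simp_rw [hsplit, add_zero] at hlim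
  have hzero := neg_eq_zero.mp (tendsto_nhds_unique tendsto_const_nhds hlim)
  exact (integral_eq_zero_iff_of_nonneg (fun g ↦ mul_nonneg (hf _).1 (hf _).1)
    (hmul hfm hfm hf₁ hf₁ x y)).mp hzero

end PairCorrelation

/-! ### Involutions -/

section Involution

variable {α : Type*} [MeasurableSpace α] {μ : Measure α} {σ : α → α} {f : α → ℝ}

lemma integral_add_comp_involutive (hσ : MeasurePreserving σ μ μ) (hσσ : Function.Involutive σ)
    (hf : Integrable f μ) : ∫ x, (f x + f (σ x)) ∂μ = 2 * ∫ x, f x ∂μ := by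
  have hfσ : Integrable (fun x ↦ f (σ x)) μ := hσ.integrable_comp_of_integrable hf
  rw [integral_add hf hfσ, two_mul,
    hσ.integral_comp (MeasurableEquiv.ofInvolutive σ hσσ hσ.measurable).measurableEmbedding]

variable [IsFiniteMeasure μ]

lemma IsWeakStarNull.ae_add_comp_le_one {F : ℕ → α → ℝ}
    (hFf : IsWeakStarNull μ fun k x ↦ F k x - f x) (hσ : MeasurePreserving σ μ μ)
    (hσσ : Function.Involutive σ) (hf : Integrable f μ) (hF : ∀ k x, F k x + F k (σ x) ≤ 1) :
    ∀ᵐ x ∂μ, f x + f (σ x) ≤ 1 := by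
  have hff : Integrable (fun x ↦ f x + f (σ x)) μ := hf.add (hσ.integrable_comp_of_integrable hf)
  refine ae_le_of_forall_setIntegral_le hff (integrable_const 1) fun A hA _ ↦ ?_
  have hpre : σ ⁻¹' (σ ⁻¹' A) = A := by rw [← Set.preimage_comp, hσσ.comp_self, Set.preimage_id]
  have hh : ∀ k, Integrable (fun x ↦ F k x - f x) μ := fun k ↦
    integrable_of_abs_le_one (hFf.measurable k) (hFf.abs_le_one k)
  have hhσ : ∀ k, Integrable (fun x ↦ F k (σ x) - f (σ x)) μ := fun k ↦
    hσ.integrable_comp_of_integrable (hh k)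
  have hsum : ∀ k, ∫ x in A, (F k x - f x + (F k (σ x) - f (σ x))) ∂μ =
      ∫ x in A, (F k x - f x) ∂μ + ∫ x in σ ⁻¹' A, (F k x - f x) ∂μ := fun k ↦ by
    rw [integral_add (hh k).integrableOn (hhσ k).integrableOn, ← hσ.setIntegral_preimage_emb
      (MeasurableEquiv.ofInvolutive σ hσσ hσ.measurable).measurableEmbedding _ (σ ⁻¹' A), hpre]
  have hlim := (hFf.tendsto_setIntegral A hA).add
    (hFf.tendsto_setIntegral (σ ⁻¹' A) (hσ.measurable hA))
  simp_rw [← hsum, add_zero] at hlim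
  rw [← sub_nonneg, ← integral_sub (integrable_const 1).integrableOn hff.integrableOn]
  refine le_of_tendsto' hlim fun k ↦ integral_mono ((hh k).add (hhσ k)).integrableOn
    ((integrable_const 1).sub hff).integrableOn fun x ↦ ?_
  change F k x - f x + (F k (σ x) - f (σ x)) ≤ 1 - (f x + f (σ x))
  linarith [hF k x]

lemma exists_subset_forall_notMem_comp [StandardBorelSpace α] (hσ : Measurable σ)
    (hσσ : Function.Involutive σ) (hσ₀ : ∀ x, σ x ≠ x) {K : Set α} (hK : MeasurableSet K) :
    ∃ I ⊆ K, MeasurableSet I ∧ (∀ x ∈ I, σ x ∉ I) ∧ ∀ x ∈ K, x ∈ I ∨ σ x ∈ I := by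
  let e := embeddingReal α
  have he : MeasurableEmbedding e := measurableEmbedding_embeddingReal α
  refine ⟨K ∩ {x | σ x ∈ K → e x < e (σ x)}, Set.inter_subset_left, hK.inter
    ((hσ hK).imp (measurableSet_lt he.measurable (he.measurable.comp hσ))), ?_, fun x hx ↦ ?_⟩
  · rintro x ⟨hx, hlt⟩ ⟨hσx, hlt'⟩
    have hgt := hlt' (by rwa [hσσ x])
    rw [hσσ x] at hgt
    exact (hlt hσx).not_gt hgt
  · by_cases hσx : σ x ∈ K
    · refine (he.injective.ne (hσ₀ x)).lt_or_gt.symm.imp (fun h ↦ ⟨hx, fun _ ↦ h⟩) fun h ↦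
        ⟨hσx, fun _ ↦ ?_⟩
      rwa [hσσ x]
    · exact .inl ⟨hx, fun h ↦ (hσx h).elim⟩

lemma exists_subset_forall_notMem_comp_integral_le [StandardBorelSpace α]
    (hσ : MeasurePreserving σ μ μ) (hσσ : Function.Involutive σ) (hσ₀ : ∀ x, σ x ≠ x)
    (hf : Integrable f μ) (hfσ : ∀ᵐ x ∂μ, f x + f (σ x) ≤ 1) {K : Set α} (hK : MeasurableSet K)
    (hfK : ∀ᵐ x ∂μ, x ∉ K → f x = 0) :
    ∃ I ⊆ K, MeasurableSet I ∧ (∀ x ∈ I, σ x ∉ I) ∧ ∫ x, f x ∂μ ≤ μ.real I := by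
  obtain ⟨I, hIK, hI, hIσ, hKI⟩ := exists_subset_forall_notMem_comp hσ.measurable hσσ hσ₀ hK
  refine ⟨I, hIK, hI, hIσ, ?_⟩
  let χ : α → ℝ := I.indicator 1
  have hχ : Integrable χ μ := (integrable_const 1).indicator hI
  have hχ₀ : ∀ x, 0 ≤ χ x := fun x ↦ Set.indicator_nonneg (fun _ _ ↦ zero_le_one) x
  have hle : ∀ᵐ x ∂μ, f x + f (σ x) ≤ χ x + χ (σ x) := by
    filter_upwards [hfσ, hfK, hσ.quasiMeasurePreserving.ae hfK] with x hx hx₀ hσx₀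
    by_cases h : x ∈ I ∨ σ x ∈ I
    · refine hx.trans ?_
      rcases h with h | h
      · linarith [hχ₀ (σ x), show χ x = 1 from Set.indicator_of_mem h 1]
      · linarith [hχ₀ x, show χ (σ x) = 1 from Set.indicator_of_mem h 1]
    · have hxK : x ∉ K := fun hx ↦ h (hKI x hx)
      have hσxK : σ x ∉ K := fun hx ↦ h ((hKI (σ x) hx).symm.imp_left fun h' ↦ by rwa [hσσ x] at h')
      rw [hx₀ hxK, hσx₀ hσxK, add_zero]
      exact add_nonneg (hχ₀ _) (hχ₀ _)
  have hmono := integral_mono_ae (hf.add (hσ.integrable_comp_of_integrable hf))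
    (hχ.add (hσ.integrable_comp_of_integrable hχ)) hle
  have hχI : ∫ x, χ x ∂μ = μ.real I := integral_indicator_one hI
  have hdouble := (integral_add_comp_involutive hσ hσσ hf).symm.trans_le
    (hmono.trans_eq (integral_add_comp_involutive hσ hσσ hχ))
  linarith

end Involution

/-! ### Avoiding sets -/

section Avoiding

open scoped Topology

variable {E : Type*} [NormedAddCommGroup E] [InnerProductSpace ℝ E] {X : Set ℝ}

/-- The notion `Avoids` in the unit sphere of an arbitrary inner product space, which makes the
argument coordinate-free. -/
def IsAvoiding (X : Set ℝ) (I : Set (sphere (0 : E) 1)) : Prop :=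
  ∀ x ∈ I, ∀ y ∈ I, ⟪(x : E), (y : E)⟫ ∉ X

lemma isAvoiding_empty : IsAvoiding X (∅ : Set (sphere (0 : E) 1)) :=
  fun _ hx ↦ hx.elim

lemma IsAvoiding.eq_empty {I : Set (sphere (0 : E) 1)} (hI : IsAvoiding X I) (hX : 1 ∈ X) :
    I = ∅ :=
  Set.eq_empty_of_forall_notMem fun x hx ↦
    hI x hx x hx (by rwa [inner_self_eq_one_of_mem_sphere])

lemma IsAvoiding.of_inter_Ioo {I : Set (sphere (0 : E) 1)}
    (hI : IsAvoiding (X ∩ Set.Ioo (-1) 1) I) (hX : 1 ∉ X)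
    (hneg : -1 ∈ X → ∀ x ∈ I, -x ∉ I) : IsAvoiding X I := by
  intro x hx y hy hxy
  obtain ⟨hlo, hhi⟩ := inner_mem_Icc_of_mem_sphere x y
  rcases hlo.eq_or_lt with hlo | hlo
  · have hxy' : ⟪(x : E), ((-y : sphere (0 : E) 1) : E)⟫ = 1 := by
      rw [coe_neg_sphere, inner_neg_right, ← hlo, neg_neg]
    have hyx : x = -y := Subtype.ext ((inner_eq_one_iff_of_norm_eq_one (norm_eq_of_mem_sphere x)
      (norm_eq_of_mem_sphere (-y))).mp hxy')
    exact hneg (hlo ▸ hxy) y hy (hyx ▸ hx)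
  rcases hhi.eq_or_lt with hhi | hhi
  · exact hX (hhi ▸ hxy)
  · exact hI x hx y hy ⟨hxy, hlo, hhi⟩

lemma IsAvoiding.indicator_add_indicator_neg_le {J : Set (sphere (0 : E) 1)}
    (hJ : IsAvoiding X J) (hX : -1 ∈ X) (x : sphere (0 : E) 1) :
    J.indicator (1 : sphere (0 : E) 1 → ℝ) x + J.indicator 1 (-x) ≤ 1 := by
  have hinner : ⟪(x : E), ((-x : sphere (0 : E) 1) : E)⟫ = -1 := by
    rw [coe_neg_sphere, inner_neg_right, inner_self_eq_one_of_mem_sphere]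
  by_cases hx : x ∈ J
  · have hnx : -x ∉ J := fun hnx ↦ hJ x hx (-x) hnx (by rwa [hinner])
    rw [Set.indicator_of_mem hx, Set.indicator_of_notMem hnx, add_zero, Pi.one_apply]
  · rw [Set.indicator_of_notMem hx, zero_add]
    exact Set.indicator_le_self' (fun _ _ ↦ zero_le_one) _

variable [FiniteDimensional ℝ E]

lemma IsAvoiding.indicator_smul_mul_indicator_smul {J : Set (sphere (0 : E) 1)}
    (hJ : IsAvoiding X J) {x y : sphere (0 : E) 1} (hxy : ⟪(x : E), (y : E)⟫ ∈ X)
    (g : OrthogonalGroup E) :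
    J.indicator (1 : sphere (0 : E) 1 → ℝ) (g • x) * J.indicator 1 (g • y) = 0 := by
  by_contra hne
  refine hJ _ (Set.mem_of_indicator_ne_zero (left_ne_zero_of_mul hne)) _
    (Set.mem_of_indicator_ne_zero (right_ne_zero_of_mul hne)) ?_
  rwa [OrthogonalGroup.inner_smul_smul]

variable [MeasurableSpace E] [BorelSpace E] {ν : Measure (OrthogonalGroup E)}
  [IsProbabilityMeasure ν] [ν.IsOpenPosMeasure] {μ : Measure (sphere (0 : E) 1)}
  [SMulInvariantMeasure (OrthogonalGroup E) (sphere (0 : E) 1) μ]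

lemma measurePreserving_neg_sphere : MeasurePreserving (Neg.neg : sphere (0 : E) 1 → _) μ μ :=
  measurePreserving_smul (-1 : OrthogonalGroup E) μ

variable [IsProbabilityMeasure μ]

lemma exists_isAvoiding_of_ae_mul_smul_eq_zero {f : sphere (0 : E) 1 → ℝ} (hfm : Measurable f)
    (hf : ∀ x y : sphere (0 : E) 1, ⟪(x : E), (y : E)⟫ ∈ X → ∀ᵐ g ∂ν, f (g • x) * f (g • y) = 0) :
    ∃ K : Set (sphere (0 : E) 1), MeasurableSet K ∧ IsAvoiding X K ∧
      ∀ᵐ x ∂μ, x ∉ K → f x = 0 := by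
  obtain ⟨K, -, hKm, hK₀, hK⟩ := exists_subset_forall_frequently_smul_mem (ν := ν) (μ := μ)
    (hfm (measurableSet_singleton 0).compl)
  refine ⟨K, hKm, fun x hx y hy hxy ↦ ?_, ?_⟩
  · obtain ⟨g, ⟨hgx, hgy⟩, hg⟩ := ((hK x hx y hy).and_eventually (hf x y hxy)).exists
    exact mul_ne_zero hgx hgy hg
  · filter_upwards [measure_eq_zero_iff_ae_notMem.mp hK₀] with x hx hxK
    exact of_not_not fun hfx ↦ hx ⟨hfx, hxK⟩

variable [ν.IsMulRightInvariant]

lemma exists_weakLimit_of_isAvoiding (hE : 3 ≤ Module.finrank ℝ E)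
    {J : ℕ → Set (sphere (0 : E) 1)} (hJm : ∀ k, MeasurableSet (J k))
    (hJ : ∀ k, IsAvoiding X (J k)) {a : ℝ} (ha : Tendsto (fun k ↦ μ.real (J k)) atTop (𝓝 a)) :
    ∃ f : sphere (0 : E) 1 → ℝ, Measurable f ∧ (∀ x, f x ∈ Set.Icc (0 : ℝ) 1) ∧
      ∫ x, f x ∂μ = a ∧
      (∀ x y : sphere (0 : E) 1, ⟪(x : E), (y : E)⟫ ∈ X ∩ Set.Ioo (-1) 1 →
        ∀ᵐ g ∂ν, f (g • x) * f (g • y) = 0) ∧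
      (-1 ∈ X → ∀ᵐ x ∂μ, f x + f (-x) ≤ 1) := by
  let F : ℕ → sphere (0 : E) 1 → ℝ := fun k ↦ (J k).indicator 1
  have hFm : ∀ k, Measurable (F k) := fun k ↦ measurable_one.indicator (hJm k)
  have hF : ∀ k x, F k x ∈ Set.Icc (0 : ℝ) 1 := fun k x ↦
    ⟨Set.indicator_nonneg (fun _ _ ↦ zero_le_one) x,
      Set.indicator_le_self' (fun _ _ ↦ zero_le_one) x⟩
  have hF₁ : ∀ k x, |F k x| ≤ 1 := fun k x ↦ (abs_of_nonneg (hF k x).1).trans_le (hF k x).2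
  obtain ⟨f, φ, hfm, hf, hφ, hFf⟩ := exists_subseq_isWeakStarNull_sub (μ := μ) hFm hF
  have hfi : Integrable f μ := integrable_of_abs_le_one hfm fun x ↦
    (abs_of_nonneg (hf x).1).trans_le (hf x).2
  refine ⟨f, hfm, hf, ?_, fun x y hxy ↦ ?_, fun hX ↦ ?_⟩
  · have hsplit : ∀ k, ∫ x in Set.univ, (F (φ k) x - f x) ∂μ = μ.real (J (φ k)) - ∫ x, f x ∂μ :=
      fun k ↦ by
        rw [setIntegral_univ, integral_sub (integrable_of_abs_le_one (hFm _) (hF₁ _)) hfi,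
          integral_indicator_one (hJm _)]
    have hlim := hFf.tendsto_setIntegral Set.univ .univ
    simp_rw [hsplit] at hlim
    exact (sub_eq_zero.mp (tendsto_nhds_unique
      ((ha.comp hφ.tendsto_atTop).sub_const _) hlim)).symm
  · exact ae_mul_smul_eq_zero hE hxy.2 (fun k ↦ hFm (φ k)) (fun k ↦ hF₁ (φ k)) hfm hf hFf
      fun k g ↦ (hJ (φ k)).indicator_smul_mul_indicator_smul hxy.1 g
  · exact hFf.ae_add_comp_le_one measurePreserving_neg_sphere neg_involutive hfi
      fun k x ↦ (hJ (φ k)).indicator_add_indicator_neg_le hX x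

lemma exists_isAvoiding_le_measureReal (hE : 3 ≤ Module.finrank ℝ E) (hX : 1 ∉ X)
    {J : ℕ → Set (sphere (0 : E) 1)} (hJm : ∀ k, MeasurableSet (J k))
    (hJ : ∀ k, IsAvoiding X (J k)) {a : ℝ} (ha : Tendsto (fun k ↦ μ.real (J k)) atTop (𝓝 a)) :
    ∃ I : Set (sphere (0 : E) 1), MeasurableSet I ∧ IsAvoiding X I ∧ a ≤ μ.real I := by
  obtain ⟨ν, _, _, _⟩ := exists_isMulRightInvariant_isProbabilityMeasure (OrthogonalGroup E)
  obtain ⟨f, hfm, hf, rfl, hfX, hfneg⟩ := exists_weakLimit_of_isAvoiding (ν := ν) hE hJm hJ ha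
  obtain ⟨K, hKm, hK, hfK⟩ := exists_isAvoiding_of_ae_mul_smul_eq_zero (μ := μ) hfm hfX
  have hfi : Integrable f μ := integrable_of_abs_le_one hfm fun x ↦
    (abs_of_nonneg (hf x).1).trans_le (hf x).2
  by_cases hneg : -1 ∈ X
  · obtain ⟨I, hIK, hIm, hI, hle⟩ := exists_subset_forall_notMem_comp_integral_le
      measurePreserving_neg_sphere neg_involutive (fun x ↦ (ne_neg_of_mem_unit_sphere ℝ x).symm)
      hfi (hfneg hneg) hKm hfK
    have hIX : IsAvoiding (X ∩ Set.Ioo (-1) 1) I := fun x hx y hy ↦ hK x (hIK hx) y (hIK hy)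
    exact ⟨I, hIm, hIX.of_inter_Ioo hX fun _ ↦ hI, hle⟩
  · exact ⟨K, hKm, hK.of_inter_Ioo hX fun h ↦ (hneg h).elim,
      integral_le_measureReal_of_ae_eq_zero hfi (fun x ↦ (hf x).2) hfK⟩

end Avoiding

theorem exists_maximal_avoiding_general {E : Type*} [NormedAddCommGroup E]
    [InnerProductSpace ℝ E] [FiniteDimensional ℝ E] [MeasurableSpace E] [BorelSpace E]
    (hE : 3 ≤ Module.finrank ℝ E) (X : Set ℝ)
    (μ : Measure (sphere (0 : E) 1)) [IsProbabilityMeasure μ]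
    [SMulInvariantMeasure (OrthogonalGroup E) (sphere (0 : E) 1) μ] :
    ∃ I : Set (sphere (0 : E) 1), MeasurableSet I ∧ IsAvoiding X I ∧
      ∀ J : Set (sphere (0 : E) 1), MeasurableSet J → IsAvoiding X J → μ J ≤ μ I := by
  by_cases hX : 1 ∈ X
  · exact ⟨∅, .empty, isAvoiding_empty, fun J _ hJ ↦ (congrArg μ (hJ.eq_empty hX)).le⟩
  let V : Set ℝ := {r | ∃ J : Set (sphere (0 : E) 1), MeasurableSet J ∧ IsAvoiding X J ∧
    μ.real J = r}
  have hV : V.Nonempty := ⟨_, ∅, .empty, isAvoiding_empty, rfl⟩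
  have hVb : BddAbove V := ⟨1, by rintro r ⟨J, -, -, rfl⟩; exact measureReal_le_one⟩
  obtain ⟨u, -, hu, huV⟩ := exists_seq_tendsto_sSup hV hVb
  choose J hJm hJX hJu using huV
  obtain ⟨I, hIm, hI, hle⟩ := exists_isAvoiding_le_measureReal hE hX hJm hJX
    (hu.congr fun k ↦ (hJu k).symm)
  refine ⟨I, hIm, hI, fun A hAm hA ↦ ?_⟩
  exact (ENNReal.toReal_le_toReal (measure_ne_top _ _) (measure_ne_top _ _)).mp
    ((le_csSup hVb ⟨A, hAm, hA, rfl⟩).trans hle)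

instance (n : ℕ) [NeZero n] : IsProbabilityMeasure (sphMeasure n) := by
  constructor
  rw [sphMeasure, Measure.smul_apply, smul_eq_mul]
  exact ENNReal.inv_mul_cancel (Measure.measure_univ_ne_zero.mpr (Measure.toSphere_ne_zero _))
    (measure_ne_top _ _)

instance (n : ℕ) :
    SMulInvariantMeasure (OrthogonalGroup (Eucl n)) (Sph n) (sphMeasure n) := by
  unfold sphMeasure
  infer_instance

/-- **Theorem (existence of a maximiser).** Let `n ≥ 3` and let `X` be an arbitrary subset
of `[-1,1]`. Then there exists a measurable `X`-avoiding set `I ⊆ S^{n-1}` of maximum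
measure: `λ(J) ≤ λ(I)` for every measurable `X`-avoiding set `J`. -/
theorem exists_maximal_avoiding {n : ℕ} (hn : 3 ≤ n) (X : Set ℝ)
    (hX : X ⊆ Set.Icc (-1 : ℝ) 1) :
    ∃ I : Set (Sph n), MeasurableSet I ∧ Avoids X I ∧
      ∀ J : Set (Sph n), MeasurableSet J → Avoids X J →
        sphMeasure n J ≤ sphMeasure n I := by
  have : NeZero n := ⟨by lia⟩
  exact exists_maximal_avoiding_general (by rwa [finrank_euclideanSpace_fin]) X (sphMeasure n)
end
end
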